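/- arXiv:2507.20303 — 2 statements merged into one kernel-verified Lean document; each statement's English description precedes it below -/
import Mathlib

section
/- Let Λ = ω₁ℤ + ω₂ℤ with ω₁ > 0 real, Im ω₂ > 0, and ω₁·Im ω₂ = π/2. Let α₁, …, α_N ∈ ℂ, β > 0, and let Π_𝛂 = π_{α₁}⋯π_{α_N} be the monic pseudopolynomial of degree N with roots α₁, …, α_N. Then its L^β quasi-norm over a fundamental domain D of Λ satisfies (π/2)·e^{NβA_Λ}·Θ_{N,β}(ℂ/Λ) ≤ ∫_D |Π_𝛂(z)|^β dA(z) ≤ (π/2)·e^{NβA_Λ}·E(βN, Λ). -/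
open MeasureTheory

/-- The lattice `Λ = ω₁ℤ + ω₂ℤ` as a subset of `ℂ`. -/
def latticeSet (ω₁ ω₂ : ℂ) : Set ℂ :=
  {w : ℂ | ∃ m n : ℤ, w = (m : ℂ) * ω₁ + (n : ℂ) * ω₂}

/-- The Weierstrass sigma function of the lattice `ω₁ℤ + ω₂ℤ`. -/
noncomputable def wSigma (ω₁ ω₂ : ℂ) (z : ℂ) : ℂ :=
  z * ∏' p : {p : ℤ × ℤ // p ≠ 0},
      (1 - z / ((p.1.1 : ℂ) * ω₁ + (p.1.2 : ℂ) * ω₂)) *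
        Complex.exp (z / ((p.1.1 : ℂ) * ω₁ + (p.1.2 : ℂ) * ω₂) +
          z ^ 2 / (2 * ((p.1.1 : ℂ) * ω₁ + (p.1.2 : ℂ) * ω₂) ^ 2))

/-- The Weierstrass zeta function `ζ = σ'/σ`. -/
noncomputable def wZeta (ω₁ ω₂ : ℂ) (z : ℂ) : ℂ :=
  deriv (wSigma ω₁ ω₂) z / wSigma ω₁ ω₂ z

/-- The quasi-period `λ₁ = 2ζ(ω₁/2)`. -/
noncomputable def lambda1 (ω₁ ω₂ : ℂ) : ℂ := 2 * wZeta ω₁ ω₂ (ω₁ / 2)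

/-- The constant `b = 1 − λ₁/(2ω₁)`. -/
noncomputable def bconst (ω₁ ω₂ : ℂ) : ℂ := 1 - lambda1 ω₁ ω₂ / (2 * ω₁)

/-- The modified Weierstrass sigma function `σ_*(z) = e^{b z²} σ(z)`. -/
noncomputable def sigmaStar (ω₁ ω₂ : ℂ) (z : ℂ) : ℂ :=
  Complex.exp (bconst ω₁ ω₂ * z ^ 2) * wSigma ω₁ ω₂ z

/-- A fundamental domain of the lattice `ω₁ℤ + ω₂ℤ`. -/
def fundDomain (ω₁ ω₂ : ℂ) : Set ℂ :=
  (fun p : ℝ × ℝ => (p.1 : ℂ) * ω₁ + (p.2 : ℂ) * ω₂) ''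
    (Set.Ico (0 : ℝ) 1 ×ˢ Set.Ico (0 : ℝ) 1)

/-- The normalizing constant `A_Λ`. -/
noncomputable def Aconst (ω₁ ω₂ : ℂ) : ℝ :=
  2 / Real.pi * ∫ z in fundDomain ω₁ ω₂, (Real.log ‖sigmaStar ω₁ ω₂ z‖ - ‖z‖ ^ 2)

/-- The unipolar Green function of the torus `ℂ/Λ`. -/
noncomputable def Utorus (ω₁ ω₂ : ℂ) (z w : ℂ) : ℝ :=
  Real.log ‖sigmaStar ω₁ ω₂ (z - w)‖ - ‖z - w‖ ^ 2 - Aconst ω₁ ω₂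

/-- The monic first degree pseudopolynomial on the torus with root `α`. -/
noncomputable def pseudoPoly (ω₁ ω₂ : ℂ) (α z : ℂ) : ℂ :=
  Complex.exp (2 * Complex.I * ((((starRingEnd ℂ) α) * z).im : ℂ)) *
    (Complex.exp (-((‖z - α‖ ^ 2 : ℝ) : ℂ)) * sigmaStar ω₁ ω₂ (z - α))

/-- The torus packing number `Θ_{N,β}(ℂ/Λ)`. -/
noncomputable def ThetaTorus (ω₁ ω₂ : ℂ) (N : ℕ) (β : ℝ) : ℝ :=
  ⨅ w : Fin N → ℂ,
    2 / Real.pi *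
      ∫ z in fundDomain ω₁ ω₂, Real.exp (∑ j, β * Utorus ω₁ ω₂ z (w j))

/-- The quantity `E(γ, Λ)`. -/
noncomputable def Etorus (ω₁ ω₂ : ℂ) (γ : ℝ) : ℝ :=
  2 / Real.pi * ∫ z in fundDomain ω₁ ω₂, Real.exp (γ * Utorus ω₁ ω₂ z 0)


open Filter Topology

/-- The Weierstrass factor. -/
noncomputable def sF (τ z : ℂ) (p : ℤ × ℤ) : ℂ :=
  (1 - z / ((p.1 : ℂ) * τ + (p.2 : ℂ))) *
    Complex.exp (z / ((p.1 : ℂ) * τ + (p.2 : ℂ)) + z ^ 2 / (2 * ((p.1 : ℂ) * τ + (p.2 : ℂ)) ^ 2))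

lemma wSigma_one_eq (τ z : ℂ) : wSigma 1 τ z = z * ∏' p, sF τ z p := by
  unfold wSigma
  congr 1
  rw [← (Equiv.prodComm ℤ ℤ).tprod_eq (sF τ z)]
  have h : Function.mulSupport (fun c => sF τ z ((Equiv.prodComm ℤ ℤ) c)) ⊆ {p : ℤ × ℤ | p ≠ 0} := by
    intro p hp h0
    apply hp
    simp [h0, sF]
  rw [← tprod_subtype_eq_of_mulSupport_subset h]
  apply tprod_congr
  intro p
  simp only [sF, Equiv.prodComm_apply, Prod.fst_swap, Prod.snd_swap, mul_one]
  rw [add_comm (p.1.1 : ℂ)]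

lemma wfactor_bound {u : ℂ} (hu : ‖u‖ ≤ 1 / 2) :
    ‖(1 - u) * Complex.exp (u + u ^ 2 / 2) - 1‖ ≤ 2 * ‖u‖ ^ 3 := by
  have hu1 : ‖-u‖ < 1 := by rw [norm_neg]; linarith
  have h := Complex.norm_log_sub_logTaylor_le 2 hu1
  have hne : 1 - u ≠ 0 := by
    intro h0
    have : u = 1 := by linear_combination -h0
    rw [this] at hu; norm_num at hu
  have ht : Complex.logTaylor 3 (-u) = -u - u ^ 2 / 2 := by
    simp [Complex.logTaylor, Finset.sum_range_succ]
    ring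
  set δ := Complex.log (1 + -u) - Complex.logTaylor (2 + 1) (-u) with hδ
  have hδ' : (1 - u) * Complex.exp (u + u ^ 2 / 2) = Complex.exp δ := by
    rw [hδ, show (2 + 1) = 3 from rfl, ht, show Complex.log (1 + -u) - (-u - u ^ 2 / 2) =
      Complex.log (1 - u) + (u + u ^ 2 / 2) by rw [← sub_eq_add_neg]; ring, Complex.exp_add (Complex.log _),
      Complex.exp_log hne]
  have hb : ‖δ‖ ≤ ‖u‖ ^ 3 := by
    refine h.trans ?_
    rw [norm_neg]
    have : (1 - ‖u‖)⁻¹ ≤ 2 := by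
      rw [inv_le_comm₀ (by linarith) (by norm_num)]; linarith
    have h3 : 0 ≤ ‖u‖ ^ 3 := by positivity
    push_cast
    norm_num
    nlinarith
  have hb1 : ‖δ‖ ≤ 1 := hb.trans (by
    calc ‖u‖ ^ 3 ≤ (1 / 2) ^ 3 := by gcongr
      _ ≤ 1 := by norm_num)
  rw [hδ']
  exact (Complex.norm_exp_sub_one_le hb1).trans (by linarith)

lemma summ3 (τ : UpperHalfPlane) :
    Summable fun p : ℤ × ℤ => ‖((p.1 : ℂ) * τ + (p.2 : ℂ))‖⁻¹ ^ 3 := by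
  have h := (summable_prod_eisSummand (k := 3) le_rfl τ).norm
  refine h.congr fun p => ?_
  simp [EisensteinSeries.eisSummand]

lemma sF_bound (τ : UpperHalfPlane) (R : ℝ) (hR : 0 < R) :
    ∀ᶠ p : ℤ × ℤ in cofinite, ∀ z ∈ Metric.ball (0 : ℂ) R,
      ‖sF τ z p - 1‖ ≤ 2 * R ^ 3 * ‖((p.1 : ℂ) * τ + (p.2 : ℂ))‖⁻¹ ^ 3 := by
  have h := (summ3 τ).tendsto_cofinite_zero.eventually_le_const
    (show (0 : ℝ) < (2 * R)⁻¹ ^ 3 by positivity)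
  filter_upwards [h] with p hp z hz
  have hp' : ‖((p.1 : ℂ) * τ + (p.2 : ℂ))‖⁻¹ ≤ (2 * R)⁻¹ :=
    le_of_pow_le_pow_left₀ (by norm_num) (by positivity) hp
  set w := (p.1 : ℂ) * τ + (p.2 : ℂ) with hw
  have hzR : ‖z‖ ≤ R := by simpa using (Metric.mem_ball.1 hz).le
  have hu : ‖z / w‖ ≤ R * ‖w‖⁻¹ := by
    rw [norm_div, div_eq_mul_inv]; gcongr
  have hu2 : ‖z / w‖ ≤ 1 / 2 := hu.trans (by
    calc R * ‖w‖⁻¹ ≤ R * (2 * R)⁻¹ := by gcongr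
      _ = 1 / 2 := by field_simp)
  have := wfactor_bound hu2
  have e : sF τ z p = (1 - z / w) * Complex.exp (z / w + (z / w) ^ 2 / 2) := by
    simp only [sF, ← hw]; congr 3; rw [div_pow]; field_simp
  rw [e]
  refine this.trans ?_
  calc 2 * ‖z / w‖ ^ 3 ≤ 2 * (R * ‖w‖⁻¹) ^ 3 := by gcongr
    _ = _ := by ring

lemma sF_summ (τ : UpperHalfPlane) (z : ℂ) : Summable fun p => ‖sF τ z p - 1‖ := by
  have h := sF_bound τ (‖z‖ + 1) (by positivity)
  refine Summable.of_norm_bounded_eventually ((summ3 τ).mul_left (2 * (‖z‖ + 1) ^ 3)) ?_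
  filter_upwards [h] with p hp
  simpa using! hp z (by simp)

lemma sF_hasProd (τ : UpperHalfPlane) (z : ℂ) : HasProd (sF τ z) (∏' p, sF τ z p) := by
  have := (multipliable_one_add_of_summable (sF_summ τ z)).hasProd
  simpa using! this

lemma sF_diff (τ : ℂ) (p) : Differentiable ℂ (fun z => sF τ z p - 1) := by
  unfold sF; simp only [div_eq_mul_inv]; fun_prop

lemma wSigma_one_diff (τ : UpperHalfPlane) : Differentiable ℂ (wSigma 1 τ) := by
  have : Differentiable ℂ (fun z => ∏' p, sF τ z p) := by
    intro z
    have hz : z ∈ Metric.ball (0 : ℂ) (‖z‖ + 1) := by simp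
    have h := Summable.hasProdLocallyUniformlyOn_one_add (Metric.isOpen_ball)
      ((summ3 τ).mul_left _) (sF_bound τ (‖z‖ + 1) (by positivity))
      (fun i => (sF_diff τ i).continuous.continuousOn)
    have h2 := (hasProdLocallyUniformlyOn_iff_tendstoLocallyUniformlyOn.1 h).differentiableOn
      (Eventually.of_forall fun s => by
        have : ∀ i ∈ s, Differentiable ℂ (fun z => 1 + (sF τ z i - 1)) :=
          fun i _ => (sF_diff τ i).const_add _
        exact (Differentiable.fun_finsetProd this).differentiableOn) Metric.isOpen_ball
    simpa using! h2.differentiableAt (Metric.isOpen_ball.mem_nhds hz)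
  rw [show wSigma 1 (τ : ℂ) = fun z => z * ∏' p, sF τ z p from funext (wSigma_one_eq _)]
  exact differentiable_id.mul this

lemma wSigma_one_ne (τ : UpperHalfPlane) (z : ℂ)
    (hz : ∀ p : ℤ × ℤ, z ≠ (p.1 : ℂ) * τ + p.2) : wSigma 1 τ z ≠ 0 := by
  rw [wSigma_one_eq]
  refine mul_ne_zero (by simpa using hz 0) ?_
  have := tprod_one_add_ne_zero_of_summable (f := fun p => sF τ z p - 1) ?_ (sF_summ τ z)
  · simpa using this
  · intro p
    simp only [add_sub_cancel, sF]
    refine mul_ne_zero ?_ (Complex.exp_ne_zero _)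
    intro h
    have h1 : z / ((p.1 : ℂ) * τ + p.2) = 1 := by linear_combination -h
    have h0 : (p.1 : ℂ) * τ + p.2 ≠ 0 := by
      intro h0; rw [h0] at h1; simp at h1
    exact hz p ((div_eq_one_iff_eq h0).1 h1)

lemma Icc_endpoints (M : ℕ) : Finset.Icc (-((M + 1 : ℕ) : ℤ)) ((M + 1 : ℕ) : ℤ) =
    insert (-((M : ℤ) + 1)) (insert ((M : ℤ) + 1) (Finset.Icc (-(M : ℤ)) M)) := by
  ext x; simp only [Finset.mem_Icc, Finset.mem_insert]; push_cast; omega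

lemma prod_Icc_ends {R : Type*} [CommMonoid R] (f : ℤ → R) (M : ℕ) :
    ∏ m ∈ Finset.Icc (-((M + 1 : ℕ) : ℤ)) ((M + 1 : ℕ) : ℤ), f m =
      f (-((M : ℤ) + 1)) * (f ((M : ℤ) + 1) * ∏ m ∈ Finset.Icc (-(M : ℤ)) M, f m) := by
  rw [Icc_endpoints, Finset.prod_insert, Finset.prod_insert]
  · simp
  · simp only [Finset.mem_Icc, Finset.mem_insert]; omega

lemma sum_Icc_ends {R : Type*} [AddCommMonoid R] (f : ℤ → R) (M : ℕ) :
    ∑ m ∈ Finset.Icc (-((M + 1 : ℕ) : ℤ)) ((M + 1 : ℕ) : ℤ), f m =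
      f (-((M : ℤ) + 1)) + (f ((M : ℤ) + 1) + ∑ m ∈ Finset.Icc (-(M : ℤ)) M, f m) := by
  rw [Icc_endpoints, Finset.sum_insert, Finset.sum_insert]
  · simp
  · simp only [Finset.mem_Icc, Finset.mem_insert]; omega

lemma prod_Icc_add (x : ℂ) (M : ℕ) : ∏ m ∈ Finset.Icc (-(M : ℤ)) M, (x + m) =
    (x * ∏ j ∈ Finset.range M, (1 - x ^ 2 / ((j : ℂ) + 1) ^ 2)) *
      ∏ j ∈ Finset.range M, (-((j : ℂ) + 1) ^ 2) := by
  induction M with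
  | zero => simp
  | succ M ih =>
    rw [prod_Icc_ends, ih, Finset.prod_range_succ, Finset.prod_range_succ]
    have : (M : ℂ) + 1 ≠ 0 := by exact_mod_cast Nat.succ_ne_zero M
    push_cast
    field_simp
    ring

lemma sum_Icc_odd (f : ℤ → ℂ) (h0 : f 0 = 0) (hf : ∀ n, f (-n) = -f n) (N : ℕ) :
    ∑ m ∈ Finset.Icc (-(N : ℤ)) N, f m = 0 := by
  induction N with
  | zero => simp [h0]
  | succ M ih => rw [sum_Icc_ends, ih, hf]; ring

lemma sum_Icc_inv (x : ℂ) (M : ℕ) : ∑ m ∈ Finset.Icc (-(M : ℤ)) M, 1 / (x + m) =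
    1 / x + ∑ j ∈ Finset.range M, cotTerm x j := by
  induction M with
  | zero => simp
  | succ M ih =>
    rw [sum_Icc_ends, ih, Finset.sum_range_succ]
    simp only [cotTerm]
    push_cast
    ring

lemma tendsto_Icc_sym : Tendsto (fun N : ℕ => Finset.Icc (-(N : ℤ)) N) atTop atTop := by
  refine tendsto_atTop_finset_of_monotone ?_ ?_
  · intro a b hab
    apply Finset.Icc_subset_Icc <;> simp [hab]
  · intro x
    refine ⟨x.natAbs, ?_⟩
    simp only [Finset.mem_Icc]; omega

/-- the row sums -/
noncomputable def s2 (τ : UpperHalfPlane) (n : ℤ) : ℂ := EisensteinSeries.e2Summand n τ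

lemma s2_tendsto (τ : UpperHalfPlane) (n : ℤ) :
    Tendsto (fun M : ℕ => ∑ m ∈ Finset.Icc (-(M : ℤ)) M, 1 / ((n : ℂ) * τ + m) ^ 2) atTop
      (𝓝 (s2 τ n)) := by
  have := (EisensteinSeries.e2Summand_summable n τ).hasSum.comp tendsto_Icc_sym
  refine this.congr fun M => ?_
  simp only [Function.comp]
  refine Finset.sum_congr rfl fun m _ => ?_
  simp [EisensteinSeries.eisSummand]

lemma S_tendsto (τ : UpperHalfPlane) : ∃ S : ℂ,
    Tendsto (fun N : ℕ => ∑ n ∈ Finset.Icc (-(N : ℤ)) N, s2 τ n) atTop (𝓝 S) :=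
  ⟨_, SummationFilter.hasSum_symmetricIcc_iff.1 (EisensteinSeries.hasSum_e2Summand_symmetricIcc τ)⟩

lemma nτ_compl (τ : UpperHalfPlane) {n : ℤ} (hn : n ≠ 0) :
    (n : ℂ) * τ ∈ Complex.integerComplement := by
  rintro ⟨m, hm⟩
  have := congrArg Complex.im hm
  simp [hn, τ.im_ne_zero] at this

lemma euler_sin (x : ℂ) : Tendsto (fun n : ℕ => x * ∏ j ∈ Finset.range n,
    ((1 : ℂ) - x ^ 2 / ((j : ℂ) + 1) ^ 2)) atTop (𝓝 (Complex.sin (Real.pi * x) / Real.pi)) := by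
  have := (Complex.tendsto_euler_sin_prod x).div_const (Real.pi : ℂ)
  refine this.congr fun n => ?_
  have : (Real.pi : ℂ) ≠ 0 := by exact_mod_cast Real.pi_ne_zero
  field_simp

lemma sF_prod_eq (τ z : ℂ) (n : ℤ) (s : Finset ℤ) : ∏ m ∈ s, sF τ z (n, m) =
    (∏ m ∈ s, (1 - z / ((n : ℂ) * τ + m))) * Complex.exp (z * (∑ m ∈ s, 1 / ((n : ℂ) * τ + m)) +
      z ^ 2 / 2 * ∑ m ∈ s, 1 / ((n : ℂ) * τ + m) ^ 2) := by
  simp only [sF]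
  rw [Finset.prod_mul_distrib, ← Complex.exp_sum, Finset.sum_add_distrib, Finset.mul_sum,
    Finset.mul_sum]
  congr 3
  · exact Finset.sum_congr rfl fun m _ => by ring
  · exact Finset.sum_congr rfl fun m _ => by
      rw [div_mul_div_comm, mul_one]

lemma row_tendsto (τ : UpperHalfPlane) (z : ℂ) {n : ℤ} (hn : n ≠ 0) :
    Tendsto (fun M : ℕ => ∏ m ∈ Finset.Icc (-(M : ℤ)) M, sF τ z (n, m)) atTop
      (𝓝 (Complex.sin (Real.pi * (n * τ - z)) / Complex.sin (Real.pi * (n * τ)) *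
        Complex.exp (z * (Real.pi * Complex.cot (Real.pi * (n * τ))) + z ^ 2 / 2 * s2 τ n))) := by
  have hc := nτ_compl τ hn
  simp only [sF_prod_eq]
  refine Tendsto.mul ?_ ?_
  · have h1 := (euler_sin (n * τ - z)).div (euler_sin (n * τ))
      (div_ne_zero (sin_pi_mul_ne_zero hc) (by exact_mod_cast Real.pi_ne_zero))
    rw [div_div_div_cancel_right₀ (by exact_mod_cast Real.pi_ne_zero)] at h1
    refine h1.congr fun M => ?_
    have h0 : ∏ j ∈ Finset.range M, (-((j : ℂ) + 1) ^ 2) ≠ 0 := by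
      rw [Finset.prod_ne_zero_iff]
      intro j _
      have : (j : ℂ) + 1 ≠ 0 := by exact_mod_cast Nat.succ_ne_zero j
      simp [this]
    simp only [Pi.div_apply]
    rw [← mul_div_mul_right _ _ h0, ← prod_Icc_add, ← prod_Icc_add, ← Finset.prod_div_distrib]
    refine Finset.prod_congr rfl fun m _ => ?_
    have : (n : ℂ) * τ + m ≠ 0 := Complex.integerComplement_add_ne_zero hc m
    field_simp
    ring
  · refine (Complex.continuous_exp.tendsto _).comp ?_
    refine Tendsto.add (Tendsto.const_mul _ ?_) (Tendsto.const_mul _ (s2_tendsto τ n))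
    simp only [sum_Icc_inv]
    have := (tendsto_logDeriv_euler_cot_sub hc).const_add (1 / ((n : ℂ) * τ))
    simpa using this

lemma row_zero_tendsto (τ : UpperHalfPlane) (z : ℂ) :
    Tendsto (fun M : ℕ => z * ∏ m ∈ Finset.Icc (-(M : ℤ)) M, sF τ z (0, m)) atTop
      (𝓝 (Complex.sin (Real.pi * z) / Real.pi * Complex.exp (z ^ 2 / 2 * s2 τ 0))) := by
  simp only [sF_prod_eq, ← mul_assoc]
  refine Tendsto.mul ?_ ?_
  · refine (euler_sin z).congr fun M => ?_
    congr 1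
    induction M with
    | zero => simp
    | succ M ih =>
      rw [prod_Icc_ends, Finset.prod_range_succ, ih]
      have : (M : ℂ) + 1 ≠ 0 := by exact_mod_cast Nat.succ_ne_zero M
      push_cast
      simp only [zero_mul, zero_add]
      have : (-(M : ℂ) + -1) ≠ 0 := by rw [← neg_add]; exact neg_ne_zero.2 this
      have : (-1 -(M : ℂ)) ≠ 0 := by convert this using 1; ring
      field_simp
      ring
  · refine (Complex.continuous_exp.tendsto _).comp ?_
    have h := (s2_tendsto τ 0).const_mul (z ^ 2 / 2)
    refine h.congr fun M => ?_
    rw [sum_Icc_odd (fun m => 1 / (((0 : ℤ) : ℂ) * τ + m)) (by simp) (fun m => by simp)]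
    simp

/-- row constants -/
noncomputable def kap (τ : UpperHalfPlane) (n : ℤ) : ℂ :=
  if n = 0 then -1 / Real.pi else 1 / Complex.sin (Real.pi * (n * τ))

/-- approximants of sigma -/
noncomputable def WN (τ : UpperHalfPlane) (z : ℂ) (N : ℕ) : ℂ :=
  (∏ n ∈ Finset.Icc (-(N : ℤ)) N, kap τ n) *
    (∏ n ∈ Finset.Icc (-(N : ℤ)) N, Complex.sin (Real.pi * (n * τ - z))) *
    Complex.exp (z ^ 2 / 2 * ∑ n ∈ Finset.Icc (-(N : ℤ)) N, s2 τ n)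

lemma WN_tendsto (τ : UpperHalfPlane) (z : ℂ) : Tendsto (WN τ z) atTop (𝓝 (wSigma 1 τ z)) := by
  have hrow : ∀ n : ℤ, HasProd (fun m => sF τ z (n, m)) (∏' m, sF τ z (n, m)) := by
    intro n
    have h : Summable fun m => ‖sF τ z (n, m) - 1‖ :=
      (sF_summ τ z).comp_injective (Prod.mk_right_injective n)
    simpa using! (multipliable_one_add_of_summable h).hasProd
  have h1 := ((sF_hasProd τ z).prod_fiberwise hrow).comp tendsto_Icc_sym
  have h2 := h1.const_mul z
  rw [← wSigma_one_eq] at h2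
  refine h2.congr fun N => ?_
  have hr : ∀ n : ℤ, (if n = 0 then z else 1) * ∏' m, sF τ z (n, m) =
      kap τ n * Complex.sin (Real.pi * (n * τ - z)) *
        Complex.exp (z * (Real.pi * Complex.cot (Real.pi * (n * τ))) + z ^ 2 / 2 * s2 τ n) := by
    intro n
    by_cases hn : n = 0
    · subst hn
      have := tendsto_nhds_unique (((hrow 0).comp tendsto_Icc_sym).const_mul z)
        (row_zero_tendsto τ z)
      simp only [if_true, this, kap]
      simp [Complex.cot]
      ring
    · have := tendsto_nhds_unique ((hrow n).comp tendsto_Icc_sym) (row_tendsto τ z hn)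
      simp only [hn, if_false, this, kap]
      ring
  have h0 : ∏ n ∈ Finset.Icc (-(N : ℤ)) N, (if n = 0 then z else 1) = z := by
    rw [Finset.prod_ite_eq' (Finset.Icc (-(N : ℤ)) N) 0 (fun _ => z)]
    simp
  simp only [Function.comp]
  refine Eq.trans (congrArg (· * _) h0.symm) ?_
  rw [← Finset.prod_mul_distrib, Finset.prod_congr rfl (fun n _ => hr n), Finset.prod_mul_distrib,
    Finset.prod_mul_distrib, ← Complex.exp_sum, Finset.sum_add_distrib, ← Finset.mul_sum,
    ← Finset.mul_sum, sum_Icc_odd, WN]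
  · simp [Finset.mul_sum]
  · simp [Complex.cot]
  · intro n; simp [Complex.cot, div_neg]

lemma wSigma_shift_one (τ : UpperHalfPlane) (S z : ℂ)
    (hS : Tendsto (fun N : ℕ => ∑ n ∈ Finset.Icc (-(N : ℤ)) N, s2 τ n) atTop (𝓝 S)) :
    wSigma 1 τ (z + 1) = -Complex.exp ((2 * z + 1) / 2 * S) * wSigma 1 τ z := by
  have h1 := WN_tendsto τ (z + 1)
  have h2 := ((Complex.continuous_exp.tendsto _).comp (hS.const_mul ((2 * z + 1) / 2))).neg.mul
    (WN_tendsto τ z)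
  refine tendsto_nhds_unique h1 (h2.congr fun N => ?_)
  have hs : ∏ n ∈ Finset.Icc (-(N : ℤ)) N, Complex.sin (Real.pi * (n * τ - (z + 1))) =
      - ∏ n ∈ Finset.Icc (-(N : ℤ)) N, Complex.sin (Real.pi * (n * τ - z)) := by
    have : ∀ n : ℤ, Complex.sin (Real.pi * (n * τ - (z + 1))) =
        -1 * Complex.sin (Real.pi * (n * τ - z)) := by
      intro n
      rw [show (Real.pi : ℂ) * (n * τ - (z + 1)) = Real.pi * (n * τ - z) - Real.pi by ring,
        Complex.sin_sub_pi]
      ring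
    simp only [this]
    rw [Finset.prod_mul_distrib, Finset.prod_const, Int.card_Icc]
    rw [show ((N : ℤ) + 1 - -(N : ℤ)).toNat = 2 * N + 1 by omega]
    rw [pow_add, pow_mul]; simp
  simp only [WN, Function.comp, hs]
  rw [show (z + 1) ^ 2 / 2 * ∑ n ∈ Finset.Icc (-(N : ℤ)) N, s2 τ n =
    (2 * z + 1) / 2 * ∑ n ∈ Finset.Icc (-(N : ℤ)) N, s2 τ n +
    z ^ 2 / 2 * ∑ n ∈ Finset.Icc (-(N : ℤ)) N, s2 τ n by ring, Complex.exp_add]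
  ring

lemma wSigma_neg (τ : UpperHalfPlane) (z : ℂ) : wSigma 1 τ (-z) = -wSigma 1 τ z := by
  refine tendsto_nhds_unique (WN_tendsto τ (-z)) ((WN_tendsto τ z).neg.congr fun N => ?_)
  have hs : ∏ n ∈ Finset.Icc (-(N : ℤ)) N, Complex.sin (Real.pi * (n * τ - (-z))) =
      - ∏ n ∈ Finset.Icc (-(N : ℤ)) N, Complex.sin (Real.pi * (n * τ - z)) := by
    induction N with
    | zero => simp
    | succ N ih =>
      rw [prod_Icc_ends, prod_Icc_ends, ih]
      have e1 : (Real.pi : ℂ) * (((-((N : ℤ) + 1) : ℤ) : ℂ) * τ - -z) =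
        -(Real.pi * ((((N : ℤ) + 1 : ℤ) : ℂ) * τ - z)) := by push_cast; ring
      have e2 : (Real.pi : ℂ) * (((((N : ℤ) + 1) : ℤ) : ℂ) * τ - -z) =
        -(Real.pi * (((-((N : ℤ) + 1) : ℤ) : ℂ) * τ - z)) := by push_cast; ring
      rw [e1, e2, Complex.sin_neg, Complex.sin_neg]
      ring
  simp only [WN, hs, neg_sq]
  ring

lemma exp_tend (τ : UpperHalfPlane) :
    Tendsto (fun N : ℕ => Complex.exp (2 * Real.pi * Complex.I * τ * N)) atTop (𝓝 0) := by
  rw [tendsto_zero_iff_norm_tendsto_zero]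
  have h : ‖Complex.exp (2 * Real.pi * Complex.I * τ)‖ < 1 := UpperHalfPlane.norm_exp_two_pi_I_lt_one τ
  refine (tendsto_pow_atTop_nhds_zero_of_lt_one (norm_nonneg _) h).congr fun N => ?_
  rw [← norm_pow, ← Complex.exp_nat_mul]
  congr 2; ring

lemma wSigma_shift_tau (τ : UpperHalfPlane) (S z : ℂ)
    (hS : Tendsto (fun N : ℕ => ∑ n ∈ Finset.Icc (-(N : ℤ)) N, s2 τ n) atTop (𝓝 S)) :
    wSigma 1 τ (z + τ) = -Complex.exp ((2 * z * τ + τ ^ 2) / 2 * S - Real.pi * Complex.I * τ -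
      2 * Real.pi * Complex.I * z) * wSigma 1 τ z := by
  -- the two boundary sines
  have hA : Tendsto (fun N : ℕ => Complex.exp (Real.pi * Complex.I * τ * N) *
      Complex.sin (Real.pi * (N * τ - z))) atTop
      (𝓝 (Complex.I / 2 * Complex.exp (Real.pi * Complex.I * z))) := by
    have := (((exp_tend τ).mul_const (Complex.exp (-(Real.pi * Complex.I * z)))).const_sub
      (Complex.exp (Real.pi * Complex.I * z))).mul_const (Complex.I / 2)
    have h' : (Complex.exp (Real.pi * Complex.I * z) - 0 * Complex.exp (-(Real.pi * Complex.I * z)))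
      * (Complex.I / 2) = Complex.I / 2 * Complex.exp (Real.pi * Complex.I * z) := by ring
    rw [h'] at this
    refine this.congr fun N => ?_
    rw [Complex.sin, ← Complex.exp_add, mul_div_assoc, ← mul_assoc, mul_sub,
      ← Complex.exp_add, ← Complex.exp_add]
    congr 3 <;> ring
  have hB : Tendsto (fun N : ℕ => Complex.exp (Real.pi * Complex.I * τ * N) *
      Complex.sin (Real.pi * (-(N + 1) * τ - z))) atTop
      (𝓝 (-(Complex.I / 2) * Complex.exp (-(Real.pi * Complex.I * τ) - Real.pi * Complex.I * z))) := by
    have := (((exp_tend τ).mul_const (Complex.exp (Real.pi * Complex.I * τ +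
      Real.pi * Complex.I * z))).sub_const
      (Complex.exp (-(Real.pi * Complex.I * τ) - Real.pi * Complex.I * z))).mul_const (Complex.I / 2)
    have h' : (0 * Complex.exp (Real.pi * Complex.I * τ + Real.pi * Complex.I * z) -
        Complex.exp (-(Real.pi * Complex.I * τ) - Real.pi * Complex.I * z)) * (Complex.I / 2) =
        -(Complex.I / 2) * Complex.exp (-(Real.pi * Complex.I * τ) - Real.pi * Complex.I * z) := by
      ring
    rw [h'] at this
    refine this.congr fun N => ?_
    rw [Complex.sin, ← Complex.exp_add, mul_div_assoc, ← mul_assoc, mul_sub,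
      ← Complex.exp_add, ← Complex.exp_add]
    congr 3 <;> ring
  have h1 := (WN_tendsto τ (z + τ)).mul hA
  have h2 := (((Complex.continuous_exp.tendsto _).comp
    (hS.const_mul ((2 * z * τ + τ ^ 2) / 2))).mul (WN_tendsto τ z)).mul hB
  have key := tendsto_nhds_unique h1 (h2.congr fun N => ?_)
  · have hne : Complex.I / 2 * Complex.exp (Real.pi * Complex.I * z) ≠ 0 :=
      mul_ne_zero (by simp) (Complex.exp_ne_zero _)
    apply mul_right_cancel₀ hne
    rw [key]
    have : Complex.exp ((2 * z * τ + τ ^ 2) / 2 * S) *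
        Complex.exp (-(Real.pi * Complex.I * τ) - Real.pi * Complex.I * z) =
        Complex.exp ((2 * z * τ + τ ^ 2) / 2 * S - Real.pi * Complex.I * τ -
          2 * Real.pi * Complex.I * z) * Complex.exp (Real.pi * Complex.I * z) := by
      rw [← Complex.exp_add, ← Complex.exp_add]; congr 1; ring
    linear_combination (-(Complex.I / 2) * wSigma 1 τ z) * this
  · have hs : (∏ n ∈ Finset.Icc (-(N : ℤ)) N, Complex.sin (Real.pi * (n * τ - (z + τ)))) *
        Complex.sin (Real.pi * (N * τ - z)) =
        (∏ n ∈ Finset.Icc (-(N : ℤ)) N, Complex.sin (Real.pi * (n * τ - z))) *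
        Complex.sin (Real.pi * (-(N + 1) * τ - z)) := by
      set f : ℤ → ℂ := fun n => Complex.sin (Real.pi * (n * τ - z)) with hf
      have e1 : ∏ n ∈ Finset.Icc (-(N : ℤ)) N, Complex.sin (Real.pi * (n * τ - (z + τ))) =
          ∏ n ∈ Finset.Icc (-(N : ℤ) - 1) (N - 1), f n := by
        refine Finset.prod_bij (fun n _ => n - 1) ?_ ?_ ?_ ?_
        · intro a ha; simp only [Finset.mem_Icc] at *; omega
        · intro a _ b _ h; omega
        · intro b hb; refine ⟨b + 1, ?_, by ring⟩; simp only [Finset.mem_Icc] at *; omega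
        · intro a _; simp only [hf]; push_cast; congr 2; ring
      have e2 : Complex.sin (Real.pi * (N * τ - z)) = f N := by simp [hf]
      have e3 : Complex.sin (Real.pi * (-(N + 1) * τ - z)) = f (-(N : ℤ) - 1) := by
        simp only [hf]; push_cast; congr 3; ring
      rw [e1, e2, e3]
      have i1 : insert (N : ℤ) (Finset.Icc (-(N : ℤ) - 1) (N - 1)) =
          insert (-(N : ℤ) - 1) (Finset.Icc (-(N : ℤ)) N) := by
        ext x; simp only [Finset.mem_insert, Finset.mem_Icc]; omega
      have p1 := Finset.prod_insert (f := f) (s := Finset.Icc (-(N : ℤ) - 1) (N - 1)) (a := (N : ℤ))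
        (by simp only [Finset.mem_Icc]; omega)
      have p2 := Finset.prod_insert (f := f) (s := Finset.Icc (-(N : ℤ)) N) (a := -(N : ℤ) - 1)
        (by simp only [Finset.mem_Icc]; omega)
      rw [mul_comm, ← p1, i1, p2, mul_comm]
    simp only [WN, Function.comp]
    rw [show (z + τ) ^ 2 / 2 * ∑ n ∈ Finset.Icc (-(N : ℤ)) N, s2 τ n =
      (2 * z * τ + τ ^ 2) / 2 * ∑ n ∈ Finset.Icc (-(N : ℤ)) N, s2 τ n +
      z ^ 2 / 2 * ∑ n ∈ Finset.Icc (-(N : ℤ)) N, s2 τ n by ring, Complex.exp_add]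
    generalize Complex.exp ((2 * z * τ + τ ^ 2) / 2 * ∑ n ∈ Finset.Icc (-(N : ℤ)) N, s2 τ n) = E1
    generalize Complex.exp (z ^ 2 / 2 * ∑ n ∈ Finset.Icc (-(N : ℤ)) N, s2 τ n) = E2
    generalize Complex.exp (Real.pi * Complex.I * τ * N) = E3
    linear_combination (-E1 * E2 * E3 * ∏ n ∈ Finset.Icc (-(N : ℤ)) N, kap τ n) * hs

lemma lambda_one (τ : UpperHalfPlane) (S : ℂ)
    (hS : Tendsto (fun N : ℕ => ∑ n ∈ Finset.Icc (-(N : ℤ)) N, s2 τ n) atTop (𝓝 S)) :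
    2 * deriv (wSigma 1 τ) (1 / 2) = S * wSigma 1 τ (1 / 2) := by
  have hd := wSigma_one_diff τ
  have e1 : deriv (fun z => wSigma 1 τ (z + 1)) (-1 / 2) = deriv (wSigma 1 τ) (1 / 2) := by
    rw [deriv_comp_add_const]; norm_num
  have e2 : deriv (wSigma 1 τ) (-1 / 2) = deriv (wSigma 1 τ) (1 / 2) := by
    have h : deriv (fun z => wSigma 1 τ (-z)) (-1 / 2) = deriv (fun z => -wSigma 1 τ z) (-1 / 2) := by
      rw [funext (wSigma_neg τ)]
    rw [deriv_comp_neg, deriv.fun_neg] at h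
    norm_num at h ⊢
    exact h.symm
  have e3 : HasDerivAt (fun z => -Complex.exp ((2 * z + 1) / 2 * S) * wSigma 1 τ z)
      (-(Complex.exp ((2 * (-1 / 2) + 1) / 2 * S) * ((2 * 1) / 2 * S)) * wSigma 1 τ (-1 / 2) +
        -Complex.exp ((2 * (-1 / 2) + 1) / 2 * S) * deriv (wSigma 1 τ) (-1 / 2)) (-1 / 2 : ℂ) := by
    refine HasDerivAt.mul ?_ (hd _).hasDerivAt
    refine (HasDerivAt.cexp ?_).neg
    exact ((((hasDerivAt_id _).const_mul 2).add_const 1).div_const 2).mul_const S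
  rw [funext fun z => wSigma_shift_one τ S z hS, e3.deriv, e2] at e1
  have e4 : wSigma 1 τ (-1 / 2) = -wSigma 1 τ (1 / 2) := by
    rw [← wSigma_neg]; norm_num
  rw [e4] at e1
  norm_num at e1
  linear_combination -e1

lemma wSigma_scale (a : ℝ) (ha : 0 < a) (τ : UpperHalfPlane) (u : ℂ) :
    wSigma a (a * τ) (a * u) = a * wSigma 1 τ u := by
  have ha' : (a : ℂ) ≠ 0 := by exact_mod_cast ha.ne'
  unfold wSigma
  rw [mul_assoc]
  congr 3
  funext p
  have e : (p.1.1 : ℂ) * a + (p.1.2 : ℂ) * (a * τ) = a * ((p.1.1 : ℂ) * 1 + (p.1.2 : ℂ) * τ) := by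
    ring
  rw [e, mul_div_mul_left _ _ ha', mul_pow, mul_pow, mul_left_comm 2,
    mul_div_mul_left _ _ (pow_ne_zero 2 ha')]

lemma half_ne (τ : UpperHalfPlane) : wSigma 1 τ (1 / 2) ≠ 0 := by
  apply wSigma_one_ne
  intro p h
  have him := congrArg Complex.im h
  have hre := congrArg Complex.re h
  simp at him hre
  have hp : (p.1 : ℝ) = 0 := by
    rcases him with h | h
    · exact_mod_cast h
    · exact absurd h τ.im_pos.ne'
  rw [hp] at hre
  have : (2 * p.2 : ℝ) = 1 := by linarith
  have : 2 * p.2 = 1 := by exact_mod_cast this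
  omega

lemma bconst_eq (a : ℝ) (ha : 0 < a) (τ : UpperHalfPlane) (S : ℂ)
    (hS : Tendsto (fun N : ℕ => ∑ n ∈ Finset.Icc (-(N : ℤ)) N, s2 τ n) atTop (𝓝 S)) :
    bconst a (a * τ) = 1 - S / (2 * a ^ 2) := by
  have ha' : (a : ℂ) ≠ 0 := by exact_mod_cast ha.ne'
  have hf : wSigma a (a * τ) = fun z => (a : ℂ) * wSigma 1 τ (z / a) := by
    funext z
    rw [← wSigma_scale a ha τ, mul_div_cancel₀ _ ha']
  have hd : HasDerivAt (fun z => (a : ℂ) * wSigma 1 τ (z / a))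
      (a * (deriv (wSigma 1 τ) (1 / 2) * (1 / a))) (a / 2 : ℂ) := by
    refine HasDerivAt.const_mul _ ?_
    have e : (a : ℂ) / 2 / a = 1 / 2 := by field_simp
    have h := ((wSigma_one_diff τ) ((a : ℂ) / 2 / a)).hasDerivAt
    have := HasDerivAt.comp (a / 2 : ℂ) h ((hasDerivAt_id (a / 2 : ℂ)).div_const (a : ℂ))
    rw [e] at this
    exact this
  have hn := half_ne τ
  have hl := lambda_one τ S hS
  have e : (a : ℂ) / 2 / a = 1 / 2 := by field_simp
  unfold bconst lambda1 wZeta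
  rw [hf, hd.deriv]
  simp only [e]
  have : deriv (wSigma 1 τ) (1 / 2) = S * wSigma 1 τ (1 / 2) / 2 := by linear_combination hl / 2
  rw [this]
  field_simp

/-- periodic modulus -/
noncomputable def gF (ω₁ ω₂ : ℂ) (z : ℂ) : ℝ := ‖sigmaStar ω₁ ω₂ z‖ * Real.exp (-‖z‖ ^ 2)

lemma gF_eq (a : ℝ) (ha : 0 < a) (τ : UpperHalfPlane) (S : ℂ)
    (hS : Tendsto (fun N : ℕ => ∑ n ∈ Finset.Icc (-(N : ℤ)) N, s2 τ n) atTop (𝓝 S)) (u : ℂ) :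
    gF a (a * τ) (a * u) = a * ‖Complex.exp (a ^ 2 * u ^ 2 - S * u ^ 2 / 2 -
      ((a ^ 2 * (u.re ^ 2 + u.im ^ 2) : ℝ) : ℂ)) * wSigma 1 τ u‖ := by
  have ha' : (a : ℂ) ≠ 0 := by exact_mod_cast ha.ne'
  have e1 : ‖(a : ℂ) * u‖ ^ 2 = a ^ 2 * (u.re ^ 2 + u.im ^ 2) := by
    rw [norm_mul, mul_pow, Complex.sq_norm u, Complex.normSq_apply, Complex.norm_real,
      Real.norm_eq_abs, sq_abs]
    ring
  unfold gF sigmaStar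
  rw [bconst_eq a ha τ S hS, wSigma_scale a ha, e1]
  rw [Complex.exp_sub, ← Complex.ofReal_exp, norm_mul, norm_mul, norm_mul, norm_div,
    Complex.norm_real, Complex.norm_real, Real.norm_eq_abs, Real.norm_eq_abs, abs_of_pos ha,
    abs_of_pos (Real.exp_pos _), Real.exp_neg]
  rw [show (1 - S / (2 * (a : ℂ) ^ 2)) * (a * u) ^ 2 = a ^ 2 * u ^ 2 - S * u ^ 2 / 2 by field_simp]
  ring

lemma gF_shift_one (a : ℝ) (ha : 0 < a) (τ : UpperHalfPlane) (z : ℂ) :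
    gF a (a * τ) (z + a) = gF a (a * τ) z := by
  have ha' : (a : ℂ) ≠ 0 := by exact_mod_cast ha.ne'
  obtain ⟨S, hS⟩ := S_tendsto τ
  obtain ⟨u, rfl⟩ : ∃ u, z = a * u := ⟨z / a, by field_simp⟩
  rw [show (a : ℂ) * u + a = a * (u + 1) by ring, gF_eq a ha τ S hS, gF_eq a ha τ S hS,
    wSigma_shift_one τ S u hS, ← mul_assoc, mul_neg, ← Complex.exp_add, norm_mul, norm_mul,
    norm_neg, Complex.norm_exp, Complex.norm_exp]
  congr 3
  rw [← sub_eq_zero, ← Complex.sub_re]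
  have : (a : ℂ) ^ 2 * (u + 1) ^ 2 - S * (u + 1) ^ 2 / 2 -
        ((a ^ 2 * ((u + 1).re ^ 2 + (u + 1).im ^ 2) : ℝ) : ℂ) + (2 * u + 1) / 2 * S -
      (a ^ 2 * u ^ 2 - S * u ^ 2 / 2 - ((a ^ 2 * (u.re ^ 2 + u.im ^ 2) : ℝ) : ℂ)) =
      ((a ^ 2 : ℝ) : ℂ) * (2 * u + 1) - ((a ^ 2 * (2 * u.re + 1) : ℝ) : ℂ) := by
    simp only [Complex.add_re, Complex.add_im, Complex.one_re, Complex.one_im]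
    push_cast
    ring
  rw [this, Complex.sub_re, Complex.re_ofReal_mul, Complex.ofReal_re]
  simp

lemma gF_shift_tau (a : ℝ) (ha : 0 < a) (τ : UpperHalfPlane) (hpi : Real.pi = 2 * a ^ 2 * τ.im)
    (z : ℂ) : gF a (a * τ) (z + a * τ) = gF a (a * τ) z := by
  have ha' : (a : ℂ) ≠ 0 := by exact_mod_cast ha.ne'
  obtain ⟨S, hS⟩ := S_tendsto τ
  obtain ⟨u, rfl⟩ : ∃ u, z = a * u := ⟨z / a, by field_simp⟩
  rw [show (a : ℂ) * u + a * τ = a * (u + τ) by ring, gF_eq a ha τ S hS, gF_eq a ha τ S hS,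
    wSigma_shift_tau τ S u hS, ← mul_assoc, mul_neg, ← Complex.exp_add, norm_mul, norm_mul,
    norm_neg, Complex.norm_exp, Complex.norm_exp]
  congr 3
  rw [← sub_eq_zero, ← Complex.sub_re]
  have : (a : ℂ) ^ 2 * (u + τ) ^ 2 - S * (u + τ) ^ 2 / 2 -
        ((a ^ 2 * ((u + τ).re ^ 2 + (u + τ).im ^ 2) : ℝ) : ℂ) +
        ((2 * u * τ + τ ^ 2) / 2 * S - Real.pi * Complex.I * τ - 2 * Real.pi * Complex.I * u) -
      (a ^ 2 * u ^ 2 - S * u ^ 2 / 2 - ((a ^ 2 * (u.re ^ 2 + u.im ^ 2) : ℝ) : ℂ)) =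
      ((a ^ 2 : ℝ) : ℂ) * (2 * u * τ + τ * τ) -
        (Real.pi : ℂ) * (Complex.I * τ + 2 * (Complex.I * u)) -
        ((a ^ 2 * (2 * u.re * τ.re + τ.re ^ 2 + 2 * u.im * τ.im + τ.im ^ 2) : ℝ) : ℂ) := by
    simp only [Complex.add_re, Complex.add_im, UpperHalfPlane.coe_re, UpperHalfPlane.coe_im]
    push_cast
    ring
  rw [this, Complex.sub_re, Complex.sub_re, Complex.re_ofReal_mul, Complex.re_ofReal_mul,
    Complex.ofReal_re, hpi]
  simp
  ring

lemma gF_cont (a : ℝ) (ha : 0 < a) (τ : UpperHalfPlane) : Continuous (gF a (a * τ)) := by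
  have ha' : (a : ℂ) ≠ 0 := by exact_mod_cast ha.ne'
  have hf : wSigma a (a * τ) = fun z => (a : ℂ) * wSigma 1 τ (z / a) := by
    funext z
    rw [← wSigma_scale a ha τ, mul_div_cancel₀ _ ha']
  have := (wSigma_one_diff τ).continuous
  unfold gF sigmaStar
  rw [hf]
  fun_prop

lemma gF_zero (a : ℝ) (ha : 0 < a) (τ : UpperHalfPlane) : {z | gF a (a * τ) z = 0}.Countable := by
  have ha' : (a : ℂ) ≠ 0 := by exact_mod_cast ha.ne'
  refine (Set.countable_range (fun p : ℤ × ℤ => (a : ℂ) * (p.1 * τ + p.2))).mono ?_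
  intro z hz
  obtain ⟨u, rfl⟩ : ∃ u, z = a * u := ⟨z / a, by field_simp⟩
  by_contra hc
  have : wSigma 1 τ u ≠ 0 := wSigma_one_ne τ u fun p h => hc ⟨p, by simp only [h]⟩
  simp only [Set.mem_ofPred_eq, gF, sigmaStar, mul_eq_zero, norm_eq_zero, Complex.exp_ne_zero,
    Real.exp_ne_zero, or_false, false_or, wSigma_scale a ha] at hz
  rcases hz with h | h
  · exact ha' h
  · exact this h

lemma norm_pseudoPoly (ω₁ ω₂ α z : ℂ) : ‖pseudoPoly ω₁ ω₂ α z‖ = gF ω₁ ω₂ (z - α) := by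
  unfold pseudoPoly gF
  rw [norm_mul, norm_mul, Complex.norm_exp, Complex.norm_exp, ← Complex.ofReal_neg,
    Complex.ofReal_re]
  simp
  ring

lemma exp_U (ω₁ ω₂ z w : ℂ) (γ : ℝ) (h : gF ω₁ ω₂ (z - w) ≠ 0) :
    Real.exp (γ * Utorus ω₁ ω₂ z w) = gF ω₁ ω₂ (z - w) ^ γ * Real.exp (-(γ * Aconst ω₁ ω₂)) := by
  have h0 : 0 < gF ω₁ ω₂ (z - w) := lt_of_le_of_ne (by unfold gF; positivity) h.symm
  rw [Real.rpow_def_of_pos h0, ← Real.exp_add]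
  congr 1
  unfold gF at h ⊢
  rw [Real.log_mul (left_ne_zero_of_mul h) (Real.exp_ne_zero _), Real.log_exp, Utorus]
  ring

lemma lin_indep (ω₁ ω₂ : ℂ) (h1 : ω₁.im = 0) (h1' : 0 < ω₁.re) (h2 : 0 < ω₂.im) :
    LinearIndependent ℝ ![ω₁, ω₂] := by
  rw [LinearIndependent.pair_iff]
  intro s t h
  have him := congrArg Complex.im h
  have hre := congrArg Complex.re h
  simp [h1] at him hre
  have ht : t = 0 := by
    rcases him with h | h
    · exact h
    · exact absurd h h2.ne'
  subst ht
  simp at hre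
  refine ⟨?_, rfl⟩
  rcases hre with h | h
  · exact h
  · exact absurd h h1'.ne'

/-- real basis of the plane -/
noncomputable def latBasis (ω₁ ω₂ : ℂ) (h1 : ω₁.im = 0) (h1' : 0 < ω₁.re) (h2 : 0 < ω₂.im) :
    Module.Basis (Fin 2) ℝ ℂ :=
  basisOfLinearIndependentOfCardEqFinrank (lin_indep ω₁ ω₂ h1 h1' h2) (by simp)

lemma latBasis_zero (ω₁ ω₂ : ℂ) (h1 : ω₁.im = 0) (h1' : 0 < ω₁.re) (h2 : 0 < ω₂.im) :
    latBasis ω₁ ω₂ h1 h1' h2 0 = ω₁ := by simp [latBasis]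

lemma latBasis_one (ω₁ ω₂ : ℂ) (h1 : ω₁.im = 0) (h1' : 0 < ω₁.re) (h2 : 0 < ω₂.im) :
    latBasis ω₁ ω₂ h1 h1' h2 1 = ω₂ := by simp [latBasis]

lemma fund_eq (ω₁ ω₂ : ℂ) (h1 : ω₁.im = 0) (h1' : 0 < ω₁.re) (h2 : 0 < ω₂.im) :
    fundDomain ω₁ ω₂ = ZSpan.fundamentalDomain (latBasis ω₁ ω₂ h1 h1' h2) := by
  ext z
  rw [ZSpan.mem_fundamentalDomain]
  constructor
  · rintro ⟨⟨s, t⟩, ⟨hs, ht⟩, rfl⟩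
    have : (s : ℂ) * ω₁ + (t : ℂ) * ω₂ = ∑ i, ![s, t] i • latBasis ω₁ ω₂ h1 h1' h2 i := by
      simp [Fin.sum_univ_two, latBasis_zero, latBasis_one]
    simp only [this, Module.Basis.repr_sum_self]
    intro i
    fin_cases i
    · exact hs
    · exact ht
  · intro h
    refine ⟨((latBasis ω₁ ω₂ h1 h1' h2).repr z 0, (latBasis ω₁ ω₂ h1 h1' h2).repr z 1),
      ⟨h 0, h 1⟩, ?_⟩
    have := (latBasis ω₁ ω₂ h1 h1' h2).sum_repr z
    rw [Fin.sum_univ_two, latBasis_zero, latBasis_one] at this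
    simpa using this

lemma int_translate (ω₁ ω₂ : ℂ) (h1 : ω₁.im = 0) (h1' : 0 < ω₁.re) (h2 : 0 < ω₂.im)
    (f : ℂ → ℝ) (hf1 : ∀ z, f (z + ω₁) = f z) (hf2 : ∀ z, f (z + ω₂) = f z) (α : ℂ) :
    ∫ z in fundDomain ω₁ ω₂, f (z - α) = ∫ z in fundDomain ω₁ ω₂, f z := by
  rw [fund_eq ω₁ ω₂ h1 h1' h2]
  set b := latBasis ω₁ ω₂ h1 h1' h2 with hb
  have hD := ZSpan.isAddFundamentalDomain' b (volume : Measure ℂ)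
  haveI : Countable (Submodule.span ℤ (Set.range b)).toAddSubgroup :=
    inferInstanceAs (Countable (Submodule.span ℤ (Set.range b)))
  have hD' := hD.vadd_of_comm α
  have hper : ∀ g ∈ Submodule.span ℤ (Set.range b), ∀ z, f (g + z) = f z := by
    intro g hg
    induction hg using Submodule.span_induction with
    | mem x hx =>
      obtain ⟨i, rfl⟩ := hx
      intro z
      fin_cases i
      · simp only [Fin.zero_eta, hb, latBasis_zero]; rw [add_comm, hf1]
      · simp only [Fin.mk_one, hb, latBasis_one]; rw [add_comm, hf2]
    | zero => simp
    | add x y _ _ hx hy => intro z; rw [add_assoc, hx, hy]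
    | smul n x _ hx =>
      intro z
      have hp : Function.Periodic f x := fun y => by rw [add_comm, hx]
      rw [add_comm]
      exact (hp.zsmul n) z
  have e1 := hD.setIntegral_eq hD' (f := fun z => f (z - α)) (by
    rintro ⟨g, hg⟩ z
    change f (g + z - α) = f (z - α)
    rw [add_sub_assoc, hper g hg])
  rw [e1]
  have e2 := (measurePreserving_sub_right (volume : Measure ℂ) α).setIntegral_preimage_emb
    (measurableEmbedding_subRight α) f (ZSpan.fundamentalDomain b)
  rw [← e2]
  congr 2
  ext z
  rw [Set.mem_vadd_set_iff_neg_vadd_mem, Set.mem_preimage, vadd_eq_add, neg_add_eq_sub]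

lemma int_cont (ω₁ ω₂ : ℂ) (h1 : ω₁.im = 0) (h1' : 0 < ω₁.re) (h2 : 0 < ω₂.im)
    (f : ℂ → ℝ) (hf : Continuous f) : IntegrableOn f (fundDomain ω₁ ω₂) := by
  rw [fund_eq ω₁ ω₂ h1 h1' h2]
  have hB := (ZSpan.fundamentalDomain_isBounded (latBasis ω₁ ω₂ h1 h1' h2))
  exact (hf.continuousOn.integrableOn_compact hB.isCompact_closure).mono_set subset_closure

lemma amgm (N : ℕ) (hN : 1 ≤ N) (β : ℝ) (x : Fin N → ℝ) (hx : ∀ j, 0 ≤ x j) :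
    (∏ j, x j) ^ β ≤ ∑ j, (1 / N : ℝ) * x j ^ (β * N) := by
  have hN' : (N : ℝ) ≠ 0 := by exact_mod_cast (by omega : N ≠ 0)
  have h := Real.geom_mean_le_arith_mean_weighted Finset.univ (fun _ : Fin N => (1 / N : ℝ))
    (fun j => x j ^ (β * N)) (fun _ _ => by positivity) (by simp [hN'])
    (fun j _ => Real.rpow_nonneg (hx j) _)
  refine le_trans (le_of_eq ?_) h
  rw [← Real.finsetProd_rpow _ _ (fun j _ => hx j)]
  refine Finset.prod_congr rfl fun j _ => ?_
  rw [← Real.rpow_mul (hx j)]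
  congr 1
  field_simp

lemma main_aux (a : ℝ) (ha : 0 < a) (τ : UpperHalfPlane) (ω₁ ω₂ : ℂ) (e1 : ω₁ = a) (e2 : ω₂ = a * τ)
    (hpi : Real.pi = 2 * a ^ 2 * τ.im)
    (h1 : ω₁.im = 0) (h1' : 0 < ω₁.re) (h2 : 0 < ω₂.im)
    (N : ℕ) (hN : 1 ≤ N) (α : Fin N → ℂ) (β : ℝ) (hβ : 0 < β) :
    Real.pi / 2 * Real.exp ((N : ℝ) * β * Aconst ω₁ ω₂) * ThetaTorus ω₁ ω₂ N β ≤
      (∫ z in fundDomain ω₁ ω₂, ‖∏ j, pseudoPoly ω₁ ω₂ (α j) z‖ ^ β) ∧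
    (∫ z in fundDomain ω₁ ω₂, ‖∏ j, pseudoPoly ω₁ ω₂ (α j) z‖ ^ β) ≤
      Real.pi / 2 * Real.exp ((N : ℝ) * β * Aconst ω₁ ω₂) * Etorus ω₁ ω₂ (β * N) := by
  have hgc : Continuous (gF ω₁ ω₂) := by rw [e1, e2]; exact gF_cont a ha τ
  have hg1 : ∀ z, gF ω₁ ω₂ (z + ω₁) = gF ω₁ ω₂ z := by rw [e1, e2]; exact gF_shift_one a ha τ
  have hg2 : ∀ z, gF ω₁ ω₂ (z + ω₂) = gF ω₁ ω₂ z := by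
    rw [e1, e2]; exact gF_shift_tau a ha τ hpi
  have hg0 : ∀ z, 0 ≤ gF ω₁ ω₂ z := fun z => by unfold gF; positivity
  have hgz : {z | gF ω₁ ω₂ z = 0}.Countable := by rw [e1, e2]; exact gF_zero a ha τ
  have hne : ∀ w, ∀ᵐ z : ℂ, gF ω₁ ω₂ (z - w) ≠ 0 := by
    intro w
    have hc : {z | gF ω₁ ω₂ (z - w) = 0}.Countable :=
      hgz.preimage (f := fun z => z - w) (sub_left_injective)
    have := hc.ae_notMem (volume : Measure ℂ)
    exact this
  clear e1 e2
  have hpp := Real.pi_pos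
  have hP : ∀ z, ‖∏ j, pseudoPoly ω₁ ω₂ (α j) z‖ = ∏ j, gF ω₁ ω₂ (z - α j) := by
    intro z
    rw [norm_prod]
    exact Finset.prod_congr rfl fun j _ => norm_pseudoPoly _ _ _ _
  simp only [hP]
  set A := Aconst ω₁ ω₂ with hA
  constructor
  · have hb : ThetaTorus ω₁ ω₂ N β ≤ 2 / Real.pi *
        ∫ z in fundDomain ω₁ ω₂, Real.exp (∑ j, β * Utorus ω₁ ω₂ z (α j)) := by
      unfold ThetaTorus
      refine ciInf_le ⟨0, ?_⟩ α
      rintro _ ⟨w, rfl⟩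
      exact mul_nonneg (by positivity) (integral_nonneg fun _ => (Real.exp_pos _).le)
    have he : ∫ z in fundDomain ω₁ ω₂, Real.exp (∑ j, β * Utorus ω₁ ω₂ z (α j)) =
        ∫ z in fundDomain ω₁ ω₂, (∏ j, gF ω₁ ω₂ (z - α j)) ^ β * Real.exp (-(N * β * A)) := by
      apply integral_congr_ae
      have hall : ∀ᵐ z : ℂ, ∀ j, gF ω₁ ω₂ (z - α j) ≠ 0 := ae_all_iff.2 fun j => hne (α j)
      filter_upwards [ae_restrict_of_ae hall] with z hz
      rw [Real.exp_sum, Finset.prod_congr rfl fun j _ => exp_U ω₁ ω₂ z (α j) β (hz j),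
        Finset.prod_mul_distrib, Real.finsetProd_rpow _ _ (fun j _ => hg0 _), Finset.prod_const,
        ← Real.exp_nat_mul]
      simp only [Finset.card_univ, Fintype.card_fin]
      congr 2
      ring
    rw [he, integral_mul_const] at hb
    refine (mul_le_mul_of_nonneg_left hb (by positivity)).trans (le_of_eq ?_)
    rw [Real.exp_neg]
    have := Real.exp_ne_zero (N * β * A)
    field_simp
  · have hc : ∀ j, Continuous fun z => gF ω₁ ω₂ (z - α j) := fun j => hgc.comp (by fun_prop)
    have hle : (∫ z in fundDomain ω₁ ω₂, (∏ j, gF ω₁ ω₂ (z - α j)) ^ β) ≤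
        ∫ z in fundDomain ω₁ ω₂, ∑ j, (1 / N : ℝ) * gF ω₁ ω₂ (z - α j) ^ (β * N) := by
      refine integral_mono (int_cont ω₁ ω₂ h1 h1' h2 _ ?_) (int_cont ω₁ ω₂ h1 h1' h2 _ ?_) ?_
      · exact (continuous_finsetProd _ fun j _ => hc j).rpow_const fun _ => Or.inr hβ.le
      · exact continuous_finsetSum _ fun j _ => continuous_const.mul
          ((hc j).rpow_const fun _ => Or.inr (by positivity))
      · intro z
        exact amgm N hN β _ fun j => hg0 _
    refine hle.trans (le_of_eq ?_)
    rw [integral_finsetSum]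
    swap
    · intro j _
      exact int_cont ω₁ ω₂ h1 h1' h2 _ (continuous_const.mul
          ((hc j).rpow_const fun _ => Or.inr (by positivity)))
    have ht : ∀ j, ∫ z in fundDomain ω₁ ω₂, (1 / N : ℝ) * gF ω₁ ω₂ (z - α j) ^ (β * N) =
        (1 / N : ℝ) * ∫ z in fundDomain ω₁ ω₂, gF ω₁ ω₂ z ^ (β * N) := by
      intro j
      rw [integral_const_mul]
      congr 1
      exact int_translate ω₁ ω₂ h1 h1' h2 (fun z => gF ω₁ ω₂ z ^ (β * N))
        (fun z => by simp only [hg1]) (fun z => by simp only [hg2]) (α j)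
    have he : ∫ z in fundDomain ω₁ ω₂, Real.exp (β * N * Utorus ω₁ ω₂ z 0) =
        ∫ z in fundDomain ω₁ ω₂, gF ω₁ ω₂ z ^ (β * N) * Real.exp (-(β * N * A)) := by
      apply integral_congr_ae
      filter_upwards [ae_restrict_of_ae (hne 0)] with z hz
      rw [exp_U ω₁ ω₂ z 0 _ hz, sub_zero]
    rw [Finset.sum_congr rfl fun j _ => ht j, Etorus, he, integral_mul_const, Finset.sum_const,
      Finset.card_univ, Fintype.card_fin, nsmul_eq_mul, Real.exp_neg, mul_comm (N : ℝ) β]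
    have := Real.exp_ne_zero (β * N * A)
    have hN' : (N : ℝ) ≠ 0 := by exact_mod_cast (by omega : N ≠ 0)
    field_simp

/-- `L^β` quasi-norm estimates for the monic pseudopolynomial
`Π_𝛂 = π_{α₁} ⋯ π_{α_N}` over a fundamental domain of the lattice. -/
theorem pseudoPoly_Lbeta_bounds (ω₁ ω₂ : ℂ)
    (h1 : ω₁.im = 0) (h1' : 0 < ω₁.re) (h2 : 0 < ω₂.im)
    (harea : ω₁.re * ω₂.im = Real.pi / 2)
    (N : ℕ) (hN : 1 ≤ N) (α : Fin N → ℂ) (β : ℝ) (hβ : 0 < β) :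
    Real.pi / 2 * Real.exp ((N : ℝ) * β * Aconst ω₁ ω₂) * ThetaTorus ω₁ ω₂ N β ≤
      (∫ z in fundDomain ω₁ ω₂, ‖∏ j, pseudoPoly ω₁ ω₂ (α j) z‖ ^ β) ∧
    (∫ z in fundDomain ω₁ ω₂, ‖∏ j, pseudoPoly ω₁ ω₂ (α j) z‖ ^ β) ≤
      Real.pi / 2 * Real.exp ((N : ℝ) * β * Aconst ω₁ ω₂) * Etorus ω₁ ω₂ (β * N) := by
  have e1 : ω₁ = (ω₁.re : ℂ) := by
    apply Complex.ext <;> simp [h1]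
  have hne : (ω₁.re : ℂ) ≠ 0 := by exact_mod_cast h1'.ne'
  have him : (ω₂ / (ω₁.re : ℂ)).im = ω₂.im / ω₁.re := by
    rw [Complex.div_ofReal_im]
  let τ : UpperHalfPlane := ⟨ω₂ / (ω₁.re : ℂ), by rw [him]; positivity⟩
  have hτ : τ.im = ω₂.im / ω₁.re := him
  refine main_aux ω₁.re h1' τ ω₁ ω₂ e1 ?_ ?_ h1 h1' h2 N hN α β hβ
  · change ω₂ = (ω₁.re : ℂ) * (ω₂ / (ω₁.re : ℂ))
    rw [mul_div_cancel₀ _ hne]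
  · rw [hτ]
    field_simp
    linarith
end

section
/- Let Λ = ω₁ℤ + ω₂ℤ with ω₁ > 0 real, Im ω₂ > 0, and ω₁·Im ω₂ = π/2, let N ≥ 1 be an integer and γ ∈ ℂ. A function F : ℂ → ℂ is of the form F = λ·Π_𝛂 for some λ ∈ ℂ and some 𝛂 = (α₁,…,α_N) ∈ ℂ^N with α₁ + ⋯ + α_N − γ ∈ Λ if and only if F is C¹-smooth and satisfies both: (a) ∂̄_z F(z) + N z F(z) = 0 for all z ∈ ℂ, where ∂̄_z = (∂_x + i∂_y)/2; and (b) F(z + ω_j) = (−1)^N e^{2i·Im(ω̄_j(Nz − 2γ))} F(z) for j = 1, 2 and all z ∈ ℂ. -/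
open MeasureTheory

namespace SigmaAux

/-- lattice point -/
noncomputable def W (ω₁ ω₂ : ℂ) (p : ℤ × ℤ) : ℂ := (p.1 : ℂ) * ω₁ + (p.2 : ℂ) * ω₂

/-- elementary factor -/
noncomputable def EF (u : ℂ) : ℂ := (1 - u) * Complex.exp (u + u ^ 2 / 2)

lemma EF_bound (u : ℂ) (hu : ‖u‖ ≤ 1 / 2) : ‖EF u - 1‖ ≤ 8 * ‖u‖ ^ 3 := by
  set v := u + u ^ 2 / 2 with hv
  have h0 := norm_nonneg u
  have hvn : ‖v‖ ≤ 5 / 4 * ‖u‖ := by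
    calc ‖v‖ ≤ ‖u‖ + ‖u ^ 2 / 2‖ := norm_add_le _ _
      _ = ‖u‖ + ‖u‖ ^ 2 / 2 := by simp
      _ ≤ _ := by nlinarith
  have hv1 : ‖v‖ ≤ 1 := by linarith
  have hb := Complex.exp_bound hv1 (n := 3) (by norm_num)
  have hs : ∑ m ∈ Finset.range 3, v ^ m / (m.factorial : ℂ) = 1 + v + v ^ 2 / 2 := by
    simp [Finset.sum_range_succ, Nat.factorial]
  rw [hs] at hb
  have hb2 : ‖Complex.exp v - (1 + v + v ^ 2 / 2)‖ ≤ ‖v‖ ^ 3 := by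
    refine hb.trans ?_
    have : ((Nat.succ 3 : ℕ) : ℝ) * ((Nat.factorial 3 : ℕ) * (3 : ℕ) : ℝ)⁻¹ ≤ 1 := by
      norm_num [Nat.factorial]
    have h3 : 0 ≤ ‖v‖ ^ 3 := by positivity
    nlinarith
  have hv3 : ‖v‖ ^ 3 ≤ 2 * ‖u‖ ^ 3 := by
    calc ‖v‖ ^ 3 ≤ (5 / 4 * ‖u‖) ^ 3 := by gcongr
      _ ≤ _ := by
        have : 0 ≤ ‖u‖ ^ 3 := by positivity
        nlinarith
  have e : EF u - 1 = (1 - u) * (Complex.exp v - (1 + v + v ^ 2 / 2)) +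
      u ^ 3 * (- (1 / 2) - 3 / 8 * u - u ^ 2 / 8) := by
    simp only [EF, ← hv]
    rw [hv]; ring
  rw [e]
  have n1 : ‖1 - u‖ ≤ 3 / 2 := by
    refine (norm_sub_le _ _).trans ?_
    simp; linarith
  have n2 : ‖(- (1 / 2) - 3 / 8 * u - u ^ 2 / 8 : ℂ)‖ ≤ 1 := by
    calc ‖(- (1 / 2) - 3 / 8 * u - u ^ 2 / 8 : ℂ)‖ ≤ ‖(- (1 / 2) - 3 / 8 * u : ℂ)‖ + ‖u ^ 2 / 8‖ := norm_sub_le _ _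
      _ ≤ ‖(- (1 / 2) : ℂ)‖ + ‖3 / 8 * u‖ + ‖u ^ 2 / 8‖ := by gcongr; exact norm_sub_le _ _
      _ = 1 / 2 + 3 / 8 * ‖u‖ + ‖u‖ ^ 2 / 8 := by simp
      _ ≤ 1 := by nlinarith
  calc _ ≤ ‖(1 - u) * (Complex.exp v - (1 + v + v ^ 2 / 2))‖ + ‖u ^ 3 * (- (1 / 2) - 3 / 8 * u - u ^ 2 / 8)‖ := norm_add_le _ _
    _ = ‖1 - u‖ * ‖Complex.exp v - (1 + v + v ^ 2 / 2)‖ + ‖u‖ ^ 3 * ‖(- (1 / 2) - 3 / 8 * u - u ^ 2 / 8 : ℂ)‖ := by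
      rw [norm_mul, norm_mul, norm_pow]
    _ ≤ 3 / 2 * (2 * ‖u‖ ^ 3) + ‖u‖ ^ 3 * 1 := by
      gcongr
      exact hb2.trans hv3
    _ ≤ _ := by
      have : 0 ≤ ‖u‖ ^ 3 := by positivity
      linarith

lemma EF_differentiable : Differentiable ℂ EF := by unfold EF; fun_prop

lemma EF_ne_zero {u : ℂ} (hu : u ≠ 1) : EF u ≠ 0 :=
  mul_ne_zero (sub_ne_zero.mpr hu.symm) (Complex.exp_ne_zero _)

lemma W_summable {ω₁ ω₂ : ℂ} (hL : LinearIndependent ℝ ![ω₁, ω₂]) :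
    Summable (fun p : ℤ × ℤ => ‖W ω₁ ω₂ p‖⁻¹ ^ 3) := by
  let L : PeriodPair := ⟨ω₁, ω₂, hL⟩
  have h := ZLattice.summable_norm_pow_inv L.lattice 3 (by simp)
  have h2 := (L.latticeEquivProd.symm.toEquiv.summable_iff).mpr h
  refine h2.congr fun p => ?_
  have := L.latticeEquiv_symm_apply p
  simp only [Function.comp]
  have e : W ω₁ ω₂ p = (L.latticeEquivProd.symm p).1 := by rw [this]; rfl
  rw [e]; rfl

lemma W_eq_zero {ω₁ ω₂ : ℂ} (hL : LinearIndependent ℝ ![ω₁, ω₂]) {p : ℤ × ℤ}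
    (h : W ω₁ ω₂ p = 0) : p = 0 := by
  rw [LinearIndependent.pair_iff] at hL
  have := hL p.1 p.2 (by simpa [W] using h)
  ext
  · exact_mod_cast this.1
  · exact_mod_cast this.2

lemma W_small {ω₁ ω₂ : ℂ} (hL : LinearIndependent ℝ ![ω₁, ω₂]) (r : ℝ) (hr : 0 < r) :
    ∀ᶠ p : ℤ × ℤ in Filter.cofinite, ∀ z : ℂ, ‖z‖ ≤ r → ‖z / W ω₁ ω₂ p‖ ≤ 1 / 2 := by
  have h := (W_summable hL).tendsto_cofinite_zero
  have h2 := h.eventually (gt_mem_nhds (show (0:ℝ) < (1 / (2 * r)) ^ 3 by positivity))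
  filter_upwards [h2] with p hp z hz
  have h3 : ‖W ω₁ ω₂ p‖⁻¹ < 1 / (2 * r) := lt_of_pow_lt_pow_left₀ 3 (by positivity) hp
  rw [norm_div, div_eq_mul_inv]
  calc ‖z‖ * ‖W ω₁ ω₂ p‖⁻¹ ≤ r * (1 / (2 * r)) := by gcongr
    _ = 1 / 2 := by field_simp

lemma EF_ev_bound {ω₁ ω₂ : ℂ} (hL : LinearIndependent ℝ ![ω₁, ω₂]) (r : ℝ) (hr : 0 < r) :
    ∀ᶠ p : ℤ × ℤ in Filter.cofinite, ∀ z : ℂ, ‖z‖ ≤ r →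
      ‖EF (z / W ω₁ ω₂ p) - 1‖ ≤ 8 * r ^ 3 * ‖W ω₁ ω₂ p‖⁻¹ ^ 3 := by
  filter_upwards [W_small hL r hr] with p hp z hz
  refine (EF_bound _ (hp z hz)).trans ?_
  rw [norm_div, div_eq_mul_inv, mul_pow, mul_assoc]
  gcongr

lemma EF_summable {ω₁ ω₂ : ℂ} (hL : LinearIndependent ℝ ![ω₁, ω₂]) (z : ℂ) :
    Summable (fun p : ℤ × ℤ => ‖EF (z / W ω₁ ω₂ p) - 1‖) := by
  refine Summable.of_norm_bounded_eventually
    ((W_summable hL).mul_left (8 * (‖z‖ + 1) ^ 3)) ?_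
  filter_upwards [EF_ev_bound hL (‖z‖ + 1) (by positivity)] with p hp
  rw [norm_norm]
  exact hp z (by linarith)

lemma EF_multipliable {ω₁ ω₂ : ℂ} (hL : LinearIndependent ℝ ![ω₁, ω₂]) (z : ℂ) :
    Multipliable (fun p : ℤ × ℤ => EF (z / W ω₁ ω₂ p)) := by
  have := multipliable_one_add_of_summable (EF_summable hL z)
  simpa using this

lemma EF_prod_diff {ω₁ ω₂ : ℂ} (hL : LinearIndependent ℝ ![ω₁, ω₂]) :
    Differentiable ℂ (fun z => ∏' p : ℤ × ℤ, EF (z / W ω₁ ω₂ p)) := by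
  intro z
  have hd : ∀ p : ℤ × ℤ, Differentiable ℂ (fun z => EF (z / W ω₁ ω₂ p)) := fun p =>
    EF_differentiable.comp (by fun_prop)
  have h := Summable.hasProdLocallyUniformlyOn_one_add
    (f := fun (p : ℤ × ℤ) z => EF (z / W ω₁ ω₂ p) - 1)
    (K := Metric.ball (0:ℂ) (‖z‖ + 1)) Metric.isOpen_ball
    ((W_summable hL).mul_left (8 * (‖z‖ + 1) ^ 3)) (by
      filter_upwards [EF_ev_bound hL (‖z‖ + 1) (by positivity)] with p hp x hx
      exact hp x (by simpa using (mem_ball_zero_iff.mp hx).le))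
    (fun p => by
      exact ((hd p).continuous.sub continuous_const).continuousOn)
  have h2 := h.differentiableOn (.of_forall fun s ↦ by
    simpa [Finset.prod_fn] using
      DifferentiableOn.finsetProd (fun p _ ↦ (hd p).differentiableOn)) Metric.isOpen_ball
  have h3 := h2.differentiableAt (Metric.isOpen_ball.mem_nhds
    (show z ∈ Metric.ball (0:ℂ) (‖z‖ + 1) by simp))
  simpa using h3

lemma EF_zero : EF 0 = 1 := by simp [EF]

lemma wSigma_eq (ω₁ ω₂ z : ℂ) :
    wSigma ω₁ ω₂ z = z * ∏' p : ℤ × ℤ, EF (z / W ω₁ ω₂ p) := by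
  unfold wSigma
  congr 1
  have : Function.mulSupport (fun p : ℤ × ℤ => EF (z / W ω₁ ω₂ p)) ⊆ {p | p ≠ 0} := by
    intro p hp h0
    apply hp
    simp [h0, W, EF_zero]
  rw [← tprod_subtype_eq_of_mulSupport_subset this]
  refine tprod_congr fun p => ?_
  simp only [EF, W]
  congr 3
  rw [div_pow, div_div, mul_comm (2:ℂ)]

lemma wSigma_diff {ω₁ ω₂ : ℂ} (hL : LinearIndependent ℝ ![ω₁, ω₂]) :
    Differentiable ℂ (wSigma ω₁ ω₂) := by
  have : wSigma ω₁ ω₂ = fun z => z * ∏' p : ℤ × ℤ, EF (z / W ω₁ ω₂ p) :=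
    funext (wSigma_eq ω₁ ω₂)
  rw [this]
  exact differentiable_id.mul (EF_prod_diff hL)

lemma wSigma_zero (ω₁ ω₂ : ℂ) : wSigma ω₁ ω₂ 0 = 0 := by simp [wSigma]

lemma wSigma_deriv_zero {ω₁ ω₂ : ℂ} (hL : LinearIndependent ℝ ![ω₁, ω₂]) :
    deriv (wSigma ω₁ ω₂) 0 = 1 := by
  have : wSigma ω₁ ω₂ = fun z => z * ∏' p : ℤ × ℤ, EF (z / W ω₁ ω₂ p) :=
    funext (wSigma_eq ω₁ ω₂)
  rw [this, deriv_fun_mul differentiableAt_fun_id (EF_prod_diff hL 0)]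
  simp [EF_zero]

lemma wSigma_ne_zero {ω₁ ω₂ : ℂ} (hL : LinearIndependent ℝ ![ω₁, ω₂]) {z : ℂ}
    (hz : ∀ p, z ≠ W ω₁ ω₂ p) : wSigma ω₁ ω₂ z ≠ 0 := by
  rw [wSigma_eq]
  refine mul_ne_zero (by simpa [W] using hz 0) ?_
  have := tprod_one_add_ne_zero_of_summable (f := fun p : ℤ × ℤ => EF (z / W ω₁ ω₂ p) - 1)
    (fun p => by
      simp only [add_sub_cancel]
      apply EF_ne_zero
      intro h
      by_cases h0 : W ω₁ ω₂ p = 0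
      · simp [h0] at h
      · exact hz p ((div_eq_one_iff_eq h0).mp h)) (EF_summable hL z)
  simpa using this

lemma wSigma_neg (ω₁ ω₂ z : ℂ) : wSigma ω₁ ω₂ (-z) = - wSigma ω₁ ω₂ z := by
  rw [wSigma_eq, wSigma_eq, neg_mul, ← (Equiv.neg (ℤ × ℤ)).tprod_eq]
  congr 3
  ext p
  congr 1
  have : W ω₁ ω₂ (-p) = - W ω₁ ω₂ p := by simp [W]; ring
  simp [this]

lemma entire_cancel {f g s : ℂ → ℂ} (hf : Differentiable ℂ f) (hg : Differentiable ℂ g)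
    (hs : Differentiable ℂ s) (x : ℂ) (hx : s x ≠ 0) (h : ∀ z, f z * s z = g z * s z) : f = g := by
  have hf' : AnalyticOnNhd ℂ f Set.univ := fun z _ => hf.analyticAt z
  have hg' : AnalyticOnNhd ℂ g Set.univ := fun z _ => hg.analyticAt z
  refine AnalyticOnNhd.eq_of_eventuallyEq hf' hg' (z₀ := x) ?_
  filter_upwards [(hs.continuous.continuousAt).eventually_ne hx] with z hz
  exact mul_right_cancel₀ hz (h z)

noncomputable def TT (ω₁ ω₂ : ℂ) (p : ℤ × ℤ) (z : ℂ) : ℂ :=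
  (if p = 0 then z else 1) * EF (z / W ω₁ ω₂ p)

lemma TT_hasProd {ω₁ ω₂ : ℂ} (hL : LinearIndependent ℝ ![ω₁, ω₂]) (z : ℂ) :
    HasProd (fun p => TT ω₁ ω₂ p z) (wSigma ω₁ ω₂ z) := by
  rw [wSigma_eq]
  exact (hasProd_ite_eq (0 : ℤ × ℤ) z).mul (EF_multipliable hL z).hasProd

noncomputable def cc (ω₁ ω₂ : ℂ) (e p : ℤ × ℤ) : ℂ :=
  if p = 0 then - Complex.exp (3 / 2) / W ω₁ ω₂ e
  else if p = -e then W ω₁ ω₂ e else EF (W ω₁ ω₂ e / W ω₁ ω₂ (p + e))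

noncomputable def AA (ω₁ ω₂ : ℂ) (e p : ℤ × ℤ) : ℂ :=
  1 / (2 * W ω₁ ω₂ (p + e) ^ 2) - 1 / (2 * W ω₁ ω₂ p ^ 2)

noncomputable def BB (ω₁ ω₂ : ℂ) (e p : ℤ × ℤ) : ℂ :=
  1 / W ω₁ ω₂ (p + e) + W ω₁ ω₂ e / W ω₁ ω₂ (p + e) ^ 2 - 1 / W ω₁ ω₂ p

lemma W_add (ω₁ ω₂ : ℂ) (p q : ℤ × ℤ) : W ω₁ ω₂ (p + q) = W ω₁ ω₂ p + W ω₁ ω₂ q := by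
  simp [W]; ring

lemma W_neg (ω₁ ω₂ : ℂ) (p : ℤ × ℤ) : W ω₁ ω₂ (-p) = - W ω₁ ω₂ p := by
  simp [W]; ring

lemma TT_shift {ω₁ ω₂ : ℂ} (hL : LinearIndependent ℝ ![ω₁, ω₂]) (e : ℤ × ℤ) (he : e ≠ 0)
    (p : ℤ × ℤ) (z : ℂ) :
    TT ω₁ ω₂ (p + e) (z + W ω₁ ω₂ e) = TT ω₁ ω₂ p z *
      (cc ω₁ ω₂ e p * Complex.exp (AA ω₁ ω₂ e p * z ^ 2 + BB ω₁ ω₂ e p * z)) := by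
  have hω : W ω₁ ω₂ e ≠ 0 := fun h => he (W_eq_zero hL h)
  have hW0 : W ω₁ ω₂ 0 = 0 := by simp [W]
  by_cases hp0 : p = 0
  · subst hp0
    simp only [TT, cc, AA, BB, zero_add, if_neg he, if_true, EF, hW0]
    set ω := W ω₁ ω₂ e
    have e1 : (z + ω) / ω + ((z + ω) / ω) ^ 2 / 2 =
      3 / 2 + ((1 / (2 * ω ^ 2) - 1 / (2 * 0 ^ 2)) * z ^ 2 +
        (1 / ω + ω / ω ^ 2 - 1 / 0) * z) := by
      simp only [div_zero, sub_zero, mul_zero, ne_eq, OfNat.ofNat_ne_zero, not_false_eq_true, zero_pow]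
      field_simp; ring
    rw [e1, Complex.exp_add]
    simp only [div_zero, sub_zero, mul_zero, ne_eq, OfNat.ofNat_ne_zero, not_false_eq_true, zero_pow, zero_div, add_zero, Complex.exp_zero, one_mul, mul_one]
    field_simp
    ring
  by_cases hpe : p = -e
  · subst hpe
    have he' : -e ≠ 0 := by simpa using he
    simp only [TT, cc, AA, BB, neg_add_cancel, if_true, if_neg he', EF, hW0, W_neg]
    set ω := W ω₁ ω₂ e
    have e1 : (1 / (2 * 0 ^ 2) - 1 / (2 * (-ω) ^ 2)) * z ^ 2 +
        (1 / 0 + ω / 0 ^ 2 - 1 / -ω) * z = - (z / -ω + (z / -ω) ^ 2 / 2) := by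
      simp only [div_zero, zero_sub, mul_zero, ne_eq, OfNat.ofNat_ne_zero, not_false_eq_true, zero_pow, add_zero]
      field_simp; ring
    rw [e1, Complex.exp_neg]
    have := Complex.exp_ne_zero (z / -ω + (z / -ω) ^ 2 / 2)
    simp only [div_zero, sub_zero, mul_zero, ne_eq, OfNat.ofNat_ne_zero, not_false_eq_true, zero_pow, zero_div, add_zero, Complex.exp_zero, one_mul, mul_one]
    field_simp
    ring
  · have hw : W ω₁ ω₂ p ≠ 0 := fun h => hp0 (W_eq_zero hL h)
    have hpe' : p + e ≠ 0 := fun h => hpe (eq_neg_of_add_eq_zero_left h)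
    have hw' : W ω₁ ω₂ (p + e) ≠ 0 := fun h => hpe' (W_eq_zero hL h)
    have hs := W_add ω₁ ω₂ p e
    simp only [TT, cc, AA, BB, if_neg hp0, if_neg hpe, if_neg hpe', EF, one_mul]
    generalize W ω₁ ω₂ (p + e) = w' at *
    generalize W ω₁ ω₂ p = w at *
    generalize W ω₁ ω₂ e = ω at *
    have e1 : (z + ω) / w' + ((z + ω) / w') ^ 2 / 2 =
      (z / w + (z / w) ^ 2 / 2) + (ω / w' + (ω / w') ^ 2 / 2) +
      ((1 / (2 * w' ^ 2) - 1 / (2 * w ^ 2)) * z ^ 2 + (1 / w' + ω / w' ^ 2 - 1 / w) * z) := by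
      field_simp; ring
    have e2 : 1 - (z + ω) / w' = (1 - z / w) * (1 - ω / w') := by
      have : ω = w' - w := by rw [hs]; ring
      rw [this]; field_simp; ring
    rw [e1, e2, Complex.exp_add, Complex.exp_add]
    ring

lemma amgm (x y : ℝ) (hx : 0 ≤ x) (hy : 0 ≤ y) : x * y ^ 2 ≤ x ^ 3 + y ^ 3 := by
  rcases le_total x y with h | h
  · have : x * y ^ 2 ≤ y * y ^ 2 := by gcongr
    have : 0 ≤ x ^ 3 := by positivity
    nlinarith
  · have : x * y ^ 2 ≤ x * x ^ 2 := by gcongr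
    have : 0 ≤ y ^ 3 := by positivity
    nlinarith

lemma ev_ne (e : ℤ × ℤ) : ∀ᶠ p : ℤ × ℤ in Filter.cofinite, p ≠ 0 ∧ p ≠ -e := by
  rw [Filter.eventually_cofinite]
  refine (Set.toFinite {0, -e}).subset ?_
  intro p hp
  simp only [Set.mem_ofPred_eq, not_and_or, not_not] at hp
  simpa using hp

lemma sum_shift {ω₁ ω₂ : ℂ} (hL : LinearIndependent ℝ ![ω₁, ω₂]) (e : ℤ × ℤ) :
    Summable (fun p : ℤ × ℤ => ‖W ω₁ ω₂ p‖⁻¹ ^ 3 + ‖W ω₁ ω₂ (p + e)‖⁻¹ ^ 3) :=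
  (W_summable hL).add ((Equiv.addRight e).summable_iff.mpr (W_summable hL))

lemma AA_summable {ω₁ ω₂ : ℂ} (hL : LinearIndependent ℝ ![ω₁, ω₂]) (e : ℤ × ℤ) :
    Summable (AA ω₁ ω₂ e) := by
  refine Summable.of_norm_bounded_eventually ((sum_shift hL e).mul_left ‖W ω₁ ω₂ e‖) ?_
  filter_upwards [ev_ne e] with p hp
  have hw : W ω₁ ω₂ p ≠ 0 := fun h => hp.1 (W_eq_zero hL h)
  have hw' : W ω₁ ω₂ (p + e) ≠ 0 := fun h => hp.2 (eq_neg_of_add_eq_zero_left (W_eq_zero hL h))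
  have hs := W_add ω₁ ω₂ p e
  simp only [AA]
  generalize W ω₁ ω₂ (p + e) = w' at *
  generalize W ω₁ ω₂ p = w at *
  generalize W ω₁ ω₂ e = ω at *
  have e1 : 1 / (2 * w' ^ 2) - 1 / (2 * w ^ 2) =
      ω * ((- 1 / 2) * (w⁻¹ * w'⁻¹ ^ 2 + w'⁻¹ * w⁻¹ ^ 2)) := by
    have : ω = w' - w := by rw [hs]; ring
    rw [this]; field_simp; ring
  rw [e1, norm_mul]
  gcongr
  calc ‖(- 1 / 2) * (w⁻¹ * w'⁻¹ ^ 2 + w'⁻¹ * w⁻¹ ^ 2)‖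
      ≤ 1 / 2 * (‖w⁻¹ * w'⁻¹ ^ 2‖ + ‖w'⁻¹ * w⁻¹ ^ 2‖) := by
        rw [norm_mul]
        have : ‖(-1 / 2 : ℂ)‖ = 1 / 2 := by simp
        rw [this]
        gcongr
        exact norm_add_le _ _
    _ = 1 / 2 * (‖w‖⁻¹ * ‖w'‖⁻¹ ^ 2 + ‖w'‖⁻¹ * ‖w‖⁻¹ ^ 2) := by simp
    _ ≤ _ := by
      have h1 := amgm ‖w‖⁻¹ ‖w'‖⁻¹ (by positivity) (by positivity)
      have h2 := amgm ‖w'‖⁻¹ ‖w‖⁻¹ (by positivity) (by positivity)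
      linarith

lemma BB_summable {ω₁ ω₂ : ℂ} (hL : LinearIndependent ℝ ![ω₁, ω₂]) (e : ℤ × ℤ) :
    Summable (BB ω₁ ω₂ e) := by
  refine Summable.of_norm_bounded_eventually ((sum_shift hL e).mul_left (‖W ω₁ ω₂ e‖ ^ 2)) ?_
  filter_upwards [ev_ne e] with p hp
  have hw : W ω₁ ω₂ p ≠ 0 := fun h => hp.1 (W_eq_zero hL h)
  have hw' : W ω₁ ω₂ (p + e) ≠ 0 := fun h => hp.2 (eq_neg_of_add_eq_zero_left (W_eq_zero hL h))
  have hs := W_add ω₁ ω₂ p e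
  simp only [BB]
  generalize W ω₁ ω₂ (p + e) = w' at *
  generalize W ω₁ ω₂ p = w at *
  generalize W ω₁ ω₂ e = ω at *
  have e1 : 1 / w' + ω / w' ^ 2 - 1 / w = - (ω ^ 2 * (w⁻¹ * w'⁻¹ ^ 2)) := by
    have : ω = w' - w := by rw [hs]; ring
    rw [this]; field_simp; ring
  rw [e1, norm_neg, norm_mul, norm_pow]
  gcongr
  simpa using amgm ‖w‖⁻¹ ‖w'‖⁻¹ (by positivity) (by positivity)

lemma cc_multipliable {ω₁ ω₂ : ℂ} (hL : LinearIndependent ℝ ![ω₁, ω₂]) (e : ℤ × ℤ) :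
    Multipliable (cc ω₁ ω₂ e) := by
  have h0 : Summable (fun p => ‖EF (W ω₁ ω₂ e / W ω₁ ω₂ (p + e)) - 1‖) :=
    (Equiv.addRight e).summable_iff.mpr (EF_summable hL (W ω₁ ω₂ e))
  have h : Summable (fun p => ‖cc ω₁ ω₂ e p - 1‖) := by
    refine Summable.of_norm_bounded_eventually h0 ?_
    filter_upwards [ev_ne e] with p hp
    simp [cc, hp.1, hp.2]
  simpa using multipliable_one_add_of_summable h

lemma wSigma_shift_quad {ω₁ ω₂ : ℂ} (hL : LinearIndependent ℝ ![ω₁, ω₂]) (e : ℤ × ℤ)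
    (he : e ≠ 0) : ∃ A B C : ℂ, ∀ z, wSigma ω₁ ω₂ (z + W ω₁ ω₂ e) =
      C * Complex.exp (A * z ^ 2 + B * z) * wSigma ω₁ ω₂ z := by
  refine ⟨∑' p, AA ω₁ ω₂ e p, ∑' p, BB ω₁ ω₂ e p, ∏' p, cc ω₁ ω₂ e p, fun z => ?_⟩
  have h1 := (Equiv.addRight e).hasProd_iff.mpr (TT_hasProd hL (z + W ω₁ ω₂ e))
  have h2 : HasProd (fun p => Complex.exp (AA ω₁ ω₂ e p * z ^ 2 + BB ω₁ ω₂ e p * z)) _ :=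
    (((AA_summable hL e).hasSum.mul_right (z ^ 2)).add
      ((BB_summable hL e).hasSum.mul_right z)).cexp
  have h3 := (TT_hasProd hL z).mul ((cc_multipliable hL e).hasProd.mul h2)
  have h4 : ((fun p => TT ω₁ ω₂ p (z + W ω₁ ω₂ e)) ∘ (Equiv.addRight e)) = fun p => TT ω₁ ω₂ p z *
      (cc ω₁ ω₂ e p * Complex.exp (AA ω₁ ω₂ e p * z ^ 2 + BB ω₁ ω₂ e p * z)) := by
    funext p
    exact TT_shift hL e he p z
  rw [h4] at h1
  rw [h1.unique h3]
  ring

lemma wSigma_shift {ω₁ ω₂ : ℂ} (hL : LinearIndependent ℝ ![ω₁, ω₂]) (e : ℤ × ℤ)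
    (he : ∀ p, W ω₁ ω₂ e / 2 ≠ W ω₁ ω₂ p) (z : ℂ) :
    wSigma ω₁ ω₂ (z + W ω₁ ω₂ e) =
      - Complex.exp (2 * wZeta ω₁ ω₂ (W ω₁ ω₂ e / 2) * (z + W ω₁ ω₂ e / 2)) *
        wSigma ω₁ ω₂ z := by
  have he0 : e ≠ 0 := by
    rintro rfl
    exact he 0 (by simp [W])
  have hω : W ω₁ ω₂ e ≠ 0 := fun h => he0 (W_eq_zero hL h)
  obtain ⟨A, B, C, h⟩ := wSigma_shift_quad hL e he0
  have hσ := wSigma_ne_zero hL he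
  have hd := wSigma_diff hL
  generalize W ω₁ ω₂ e = ω at *
  have hA : A = 0 := by
    have hK : (fun z => C ^ 2 * Complex.exp (A * (z + ω) ^ 2 + A * z ^ 2 - B * ω)) = fun _ => 1 := by
      refine entire_cancel (by fun_prop) (by fun_prop) hd _ hσ fun z => ?_
      have a1 := h (-z - ω)
      have a2 := h z
      rw [show -z - ω + ω = -z by ring, show -z - ω = -(z + ω) by ring, wSigma_neg, wSigma_neg, a2] at a1
      have : Complex.exp (A * (z + ω) ^ 2 + A * z ^ 2 - B * ω) =
        Complex.exp (A * (-(z + ω)) ^ 2 + B * (-(z + ω))) * Complex.exp (A * z ^ 2 + B * z) := by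
        rw [← Complex.exp_add]; congr 1; ring
      rw [this]
      linear_combination a1
    have hC : C ≠ 0 := by
      rintro rfl
      simpa using congrFun hK 0
    have hd1 : HasDerivAt (fun z => C ^ 2 * Complex.exp (A * (z + ω) ^ 2 + A * z ^ 2 - B * ω))
        (C ^ 2 * (Complex.exp (A * (0 + ω) ^ 2 + A * 0 ^ 2 - B * ω) * (A * (2 * (0 + ω)) + A * (2 * 0)))) 0 := by
      have q1 : HasDerivAt (fun z : ℂ => (z + ω) ^ 2) (2 * (0 + ω)) 0 := by
        simpa using ((hasDerivAt_id (0:ℂ)).add_const ω).fun_pow 2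
      have q2 : HasDerivAt (fun z : ℂ => z ^ 2) (2 * 0) 0 := by
        simpa using (hasDerivAt_id (0:ℂ)).fun_pow 2
      exact ((((q1.const_mul A).add (q2.const_mul A)).sub_const (B * ω)).cexp).const_mul _
    rw [hK] at hd1
    have := hd1.unique (hasDerivAt_const 0 1)
    simpa [hC, hω] using this
  subst hA
  simp only [zero_mul, zero_add] at h
  have hC : C * Complex.exp (B * (-ω / 2)) = -1 := by
    have := h (-ω / 2)
    rw [show -ω / 2 + ω = ω / 2 by ring, show wSigma ω₁ ω₂ (-ω / 2) = - wSigma ω₁ ω₂ (ω / 2) by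
      rw [← wSigma_neg]; congr 1; ring] at this
    have h2 : (C * Complex.exp (B * (-ω / 2)) + 1) * wSigma ω₁ ω₂ (ω / 2) = 0 := by
      linear_combination this
    exact eq_neg_of_add_eq_zero_left ((mul_eq_zero.mp h2).resolve_right hσ)
  have hev : deriv (wSigma ω₁ ω₂) (-ω / 2) = deriv (wSigma ω₁ ω₂) (ω / 2) := by
    have h1 : (fun z => wSigma ω₁ ω₂ (-z)) = fun z => - wSigma ω₁ ω₂ z :=
      funext (wSigma_neg ω₁ ω₂)
    have h2 := congrArg (fun f => deriv f (ω / 2)) h1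
    simp only [deriv_comp_neg, deriv.fun_neg, neg_inj] at h2
    rw [← h2]; congr 1; ring
  have hB : B = 2 * wZeta ω₁ ω₂ (ω / 2) := by
    have h1 : (fun z => wSigma ω₁ ω₂ (z + ω)) = fun z => C * Complex.exp (B * z) * wSigma ω₁ ω₂ z :=
      funext h
    have h2 := congrArg (fun f => deriv f (-ω / 2)) h1
    have h3 : HasDerivAt (fun z => C * Complex.exp (B * z) * wSigma ω₁ ω₂ z)
        (C * (Complex.exp (B * (-ω / 2)) * (B * 1)) * wSigma ω₁ ω₂ (-ω / 2) +
          C * Complex.exp (B * (-ω / 2)) * deriv (wSigma ω₁ ω₂) (-ω / 2)) (-ω / 2) :=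
      ((((hasDerivAt_id (-ω / 2)).const_mul B).cexp).const_mul C).mul (hd _).hasDerivAt
    simp only [deriv_comp_add_const] at h2
    rw [h3.deriv, hev, show -ω / 2 + ω = ω / 2 by ring,
      show wSigma ω₁ ω₂ (-ω / 2) = - wSigma ω₁ ω₂ (ω / 2) by
      rw [← wSigma_neg]; congr 1; ring] at h2
    unfold wZeta
    field_simp
    linear_combination (B * wSigma ω₁ ω₂ (ω / 2) - deriv (wSigma ω₁ ω₂) (ω / 2)) * hC - h2
  rw [h z, ← hB]
  have : Complex.exp (B * (z + ω / 2)) = Complex.exp (B * z) * Complex.exp (B * (ω / 2)) := by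
    rw [← Complex.exp_add]; congr 1; ring
  have h5 : Complex.exp (B * (-ω / 2)) * Complex.exp (B * (ω / 2)) = 1 := by
    rw [← Complex.exp_add, ← Complex.exp_zero]; congr 1; ring
  rw [this]
  linear_combination (wSigma ω₁ ω₂ z * Complex.exp (B * z)) * (Complex.exp (B * (ω / 2)) * hC - C * h5)

lemma entire_div {G p : ℂ → ℂ} (hG : Differentiable ℂ G) (hp : Differentiable ℂ p)
    (h : ∀ z, p z = 0 → G z = 0 ∧ deriv p z ≠ 0) :
    ∃ H : ℂ → ℂ, Differentiable ℂ H ∧ ∀ z, G z = H z * p z := by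
  classical
  have hds : ∀ (f : ℂ → ℂ) (w : ℂ), Differentiable ℂ f → Differentiable ℂ (dslope f w) := by
    intro f w hf
    have := (Complex.differentiableOn_dslope (f := f) (s := Set.univ) (c := w) Filter.univ_mem).mpr
      hf.differentiableOn
    exact differentiableOn_univ.mp this
  refine ⟨fun z => if p z = 0 then deriv G z / deriv p z else G z / p z, fun w => ?_, fun z => ?_⟩
  · by_cases hw : p w = 0
    · have hw' := h w hw
      have hne : dslope p w w ≠ 0 := by rw [dslope_same]; exact hw'.2
      have hd : DifferentiableAt ℂ (fun z => dslope G w z / dslope p w z) w :=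
        (hds G w hG w).div (hds p w hp w) hne
      refine hd.congr_of_eventuallyEq ?_
      filter_upwards [((hds p w hp).continuous.continuousAt).eventually_ne hne] with z hz
      by_cases hzw : z = w
      · subst hzw
        simp [hw]
      · have hzw' : z - w ≠ 0 := sub_ne_zero.mpr hzw
        have e1 : dslope p w z = p z / (z - w) := by
          rw [dslope_of_ne _ hzw, slope_def_field, hw, sub_zero]
        have e2 : dslope G w z = G z / (z - w) := by
          rw [dslope_of_ne _ hzw, slope_def_field, hw'.1, sub_zero]
        have hpz : p z ≠ 0 := by
          intro h0; rw [e1, h0, zero_div] at hz; exact hz rfl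
        simp only [hpz, if_false, e1, e2]
        field_simp
    · have hd : DifferentiableAt ℂ (fun z => G z / p z) w := (hG w).div (hp w) hw
      refine hd.congr_of_eventuallyEq ?_
      filter_upwards [(hp.continuous.continuousAt).eventually_ne hw] with z hz
      simp [hz]
  · by_cases hz : p z = 0
    · simp [hz, (h z hz).1]
    · simp [hz]

structure Lat (ω₁ ω₂ : ℂ) : Prop where
  h1 : ω₁.im = 0
  h1' : 0 < ω₁.re
  h2 : 0 < ω₂.im

namespace Lat
variable {ω₁ ω₂ : ℂ}

lemma coord (L : Lat ω₁ ω₂) (z : ℂ) : ∃ a b : ℝ, z = a * ω₁ + b * ω₂ := by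
  have := L.h1'.ne'
  have := L.h2.ne'
  refine ⟨(z.re - z.im / ω₂.im * ω₂.re) / ω₁.re, z.im / ω₂.im, ?_⟩
  apply Complex.ext
  · simp [L.h1]; field_simp; ring
  · simp [L.h1]; field_simp

lemma indep (L : Lat ω₁ ω₂) : LinearIndependent ℝ ![ω₁, ω₂] := by
  rw [LinearIndependent.pair_iff]
  intro s t h
  have hre := congrArg Complex.re h
  have him := congrArg Complex.im h
  simp [L.h1] at hre him
  have ht : t = 0 := him.resolve_right L.h2.ne'
  subst ht
  simp at hre
  exact ⟨hre.resolve_right L.h1'.ne', rfl⟩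

lemma ω₁_ne (L : Lat ω₁ ω₂) : ω₁ ≠ 0 := by
  intro h; have := L.h1'; simp [h] at this

lemma periodic_W {β : Type*} {f : ℂ → β} (hf1 : Function.Periodic f ω₁)
    (hf2 : Function.Periodic f ω₂) (p : ℤ × ℤ) (z : ℂ) : f (z + W ω₁ ω₂ p) = f z := by
  unfold W
  rw [← add_assoc]
  rw [hf2.int_mul p.2, hf1.int_mul p.1]

lemma const_of_norm_periodic (L : Lat ω₁ ω₂) {G : ℂ → ℂ} (hG : Differentiable ℂ G)
    (hf1 : ∀ z, ‖G (z + ω₁)‖ = ‖G z‖) (hf2 : ∀ z, ‖G (z + ω₂)‖ = ‖G z‖) (z w : ℂ) :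
    G z = G w := by
  refine hG.apply_eq_apply_of_bounded ?_ z w
  have hc : IsCompact ((fun p : ℝ × ℝ => G (p.1 * ω₁ + p.2 * ω₂)) '' (Set.Icc 0 1 ×ˢ Set.Icc 0 1)) := by
    refine (isCompact_Icc.prod isCompact_Icc).image ?_
    have := hG.continuous
    fun_prop
  obtain ⟨M, hM⟩ := hc.isBounded.exists_norm_le
  rw [isBounded_iff_forall_norm_le]
  refine ⟨M, ?_⟩
  rintro _ ⟨x, rfl⟩
  obtain ⟨a, b, rfl⟩ := L.coord x
  have key := periodic_W (f := fun z => ‖G z‖) hf1 hf2 (⌊a⌋, ⌊b⌋)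
    (((Int.fract a : ℝ) : ℂ) * ω₁ + ((Int.fract b : ℝ) : ℂ) * ω₂)
  have e : (((Int.fract a : ℝ) : ℂ) * ω₁ + ((Int.fract b : ℝ) : ℂ) * ω₂) + W ω₁ ω₂ (⌊a⌋, ⌊b⌋)
      = a * ω₁ + b * ω₂ := by
    have ha : (a : ℂ) = ((⌊a⌋ : ℤ) : ℂ) + ((Int.fract a : ℝ) : ℂ) := by
      exact_mod_cast (Int.floor_add_fract a).symm
    have hb : (b : ℂ) = ((⌊b⌋ : ℤ) : ℂ) + ((Int.fract b : ℝ) : ℂ) := by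
      exact_mod_cast (Int.floor_add_fract b).symm
    rw [ha, hb]
    simp only [W]
    ring
  simp only [e] at key
  rw [key]
  refine hM _ ⟨(Int.fract a, Int.fract b), ⟨⟨Int.fract_nonneg _, (Int.fract_lt_one _).le⟩,
    ⟨Int.fract_nonneg _, (Int.fract_lt_one _).le⟩⟩, rfl⟩

end Lat

/-- theta functions of degree `k` -/
def QP (ω₁ ω₂ : ℂ) (G : ℂ → ℂ) (k : ℤ) : Prop :=
  Differentiable ℂ G ∧ ∃ a₁ b₁ a₂ b₂ : ℂ,
    (∀ z, G (z + ω₁) = Complex.exp (a₁ * z + b₁) * G z) ∧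
    (∀ z, G (z + ω₂) = Complex.exp (a₂ * z + b₂) * G z) ∧
    a₁ * ω₂ - a₂ * ω₁ = 2 * Real.pi * Complex.I * k

namespace QP
variable {ω₁ ω₂ : ℂ}

lemma mul {G H : ℂ → ℂ} {k l : ℤ} (hG : QP ω₁ ω₂ G k) (hH : QP ω₁ ω₂ H l) :
    QP ω₁ ω₂ (fun z => G z * H z) (k + l) := by
  obtain ⟨dG, a₁, b₁, a₂, b₂, g1, g2, g3⟩ := hG
  obtain ⟨dH, c₁, d₁, c₂, d₂, k1, k2, k3⟩ := hH
  refine ⟨dG.mul dH, a₁ + c₁, b₁ + d₁, a₂ + c₂, b₂ + d₂, fun z => ?_, fun z => ?_, ?_⟩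
  · beta_reduce
    rw [g1, k1, show (a₁ + c₁) * z + (b₁ + d₁) = (a₁ * z + b₁) + (c₁ * z + d₁) by ring,
      Complex.exp_add (a₁ * z + b₁)]; ring
  · beta_reduce
    rw [g2, k2, show (a₂ + c₂) * z + (b₂ + d₂) = (a₂ * z + b₂) + (c₂ * z + d₂) by ring,
      Complex.exp_add (a₂ * z + b₂)]; ring
  · push_cast
    linear_combination g3 + k3

lemma one : QP ω₁ ω₂ (fun _ => 1) 0 :=
  ⟨by fun_prop, 0, 0, 0, 0, by simp, by simp, by simp⟩

lemma pow {G : ℂ → ℂ} {k : ℤ} (hG : QP ω₁ ω₂ G k) (n : ℕ) :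
    QP ω₁ ω₂ (fun z => G z ^ n) (n * k) := by
  induction n with
  | zero => simpa using one
  | succ n ih =>
    have := ih.mul hG
    simp only [← pow_succ] at this
    convert this using 1
    push_cast; ring

lemma div {G H p : ℂ → ℂ} {k l : ℤ} (hG : QP ω₁ ω₂ G k) (hp : QP ω₁ ω₂ p l)
    (hH : Differentiable ℂ H) (h : ∀ z, G z = H z * p z) (x : ℂ) (hx : p x ≠ 0) :
    QP ω₁ ω₂ H (k - l) := by
  obtain ⟨dG, a₁, b₁, a₂, b₂, g1, g2, g3⟩ := hG
  obtain ⟨dp, c₁, d₁, c₂, d₂, k1, k2, k3⟩ := hp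
  have key : ∀ (a b c d ω : ℂ), (∀ z, G (z + ω) = Complex.exp (a * z + b) * G z) →
      (∀ z, p (z + ω) = Complex.exp (c * z + d) * p z) →
      ∀ z, H (z + ω) = Complex.exp ((a - c) * z + (b - d)) * H z := by
    intro a b c d ω h1 h2
    have h3 : (fun z => H (z + ω)) = fun z => Complex.exp ((a - c) * z + (b - d)) * H z := by
      refine entire_cancel (hH.comp (by fun_prop)) (by fun_prop) dp x hx fun z => ?_
      have e1 := h1 z
      rw [h, h z, h2] at e1
      have e2 : Complex.exp (a * z + b) =
          Complex.exp ((a - c) * z + (b - d)) * Complex.exp (c * z + d) := by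
        rw [← Complex.exp_add]; congr 1; ring
      rw [e2] at e1
      have := Complex.exp_ne_zero (c * z + d)
      refine mul_left_cancel₀ this ?_
      linear_combination e1
    exact fun z => congrFun h3 z
  refine ⟨hH, a₁ - c₁, b₁ - d₁, a₂ - c₂, b₂ - d₂, key _ _ _ _ _ g1 k1, key _ _ _ _ _ g2 k2, ?_⟩
  push_cast
  linear_combination g3 - k3

lemma zero_shift {G : ℂ → ℂ} {k : ℤ} (hG : QP ω₁ ω₂ G k) (z : ℂ) (p : ℤ × ℤ) :
    G (z + W ω₁ ω₂ p) = 0 ↔ G z = 0 := by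
  obtain ⟨dG, a₁, b₁, a₂, b₂, g1, g2, g3⟩ := hG
  have := Lat.periodic_W (f := fun z => (G z = 0)) (ω₁ := ω₁) (ω₂ := ω₂)
    (fun z => by simp [g1]) (fun z => by simp [g2]) p z
  exact iff_of_eq this

lemma eq_zero (L : Lat ω₁ ω₂) {G : ℂ → ℂ} (hG : QP ω₁ ω₂ G 0) (x : ℂ) (hx : G x = 0) (z : ℂ) :
    G z = 0 := by
  obtain ⟨dG, a₁, b₁, a₂, b₂, g1, g2, g3⟩ := hG
  have hω := L.ω₁_ne
  simp only [Int.cast_zero, mul_zero] at g3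
  obtain ⟨c, rfl⟩ : ∃ c, a₁ = c * ω₁ := ⟨a₁ / ω₁, by field_simp⟩
  obtain rfl : a₂ = c * ω₂ := by
    have : ω₁ * (a₂ - c * ω₂) = 0 := by linear_combination -g3
    exact sub_eq_zero.mp ((mul_eq_zero.mp this).resolve_left hω)
  obtain ⟨β, hβ1, hβ2⟩ : ∃ β : ℂ, (b₁ - c * ω₁ ^ 2 / 2 + β * ω₁).re = 0 ∧
      (b₂ - c * ω₂ ^ 2 / 2 + β * ω₂).re = 0 := by
    set r₁ := (b₁ - c * ω₁ ^ 2 / 2).re with hr1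
    set r₂ := (b₂ - c * ω₂ ^ 2 / 2).re with hr2
    have := L.h1'.ne'
    have := L.h2.ne'
    refine ⟨⟨-r₁ / ω₁.re, (r₂ + (-r₁ / ω₁.re) * ω₂.re) / ω₂.im⟩, ?_, ?_⟩
    · rw [Complex.add_re, ← hr1, Complex.mul_re, L.h1]
      field_simp; ring
    · rw [Complex.add_re, ← hr2, Complex.mul_re]
      field_simp; ring
  have key : ∀ (ω b : ℂ), (∀ z, G (z + ω) = Complex.exp (c * ω * z + b) * G z) →
      (b - c * ω ^ 2 / 2 + β * ω).re = 0 → ∀ z,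
      ‖G (z + ω) * Complex.exp (- c * (z + ω) ^ 2 / 2 + β * (z + ω))‖ =
        ‖G z * Complex.exp (- c * z ^ 2 / 2 + β * z)‖ := by
    intro ω b h1 h2 z
    have : G (z + ω) * Complex.exp (- c * (z + ω) ^ 2 / 2 + β * (z + ω)) =
      Complex.exp (b - c * ω ^ 2 / 2 + β * ω) * (G z * Complex.exp (- c * z ^ 2 / 2 + β * z)) := by
      rw [h1]
      have : Complex.exp (c * ω * z + b) * Complex.exp (- c * (z + ω) ^ 2 / 2 + β * (z + ω)) =
        Complex.exp (b - c * ω ^ 2 / 2 + β * ω) * Complex.exp (- c * z ^ 2 / 2 + β * z) := by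
        rw [← Complex.exp_add, ← Complex.exp_add]; congr 1; ring
      linear_combination G z * this
    rw [this, norm_mul, Complex.norm_exp, h2, Real.exp_zero, one_mul]
  have hc := L.const_of_norm_periodic (G := fun z => G z * Complex.exp (- c * z ^ 2 / 2 + β * z))
    (by fun_prop) (key ω₁ b₁ g1 hβ1) (key ω₂ b₂ g2 hβ2) z x
  simpa [hx] using hc

end QP

lemma theta_ne_zero {τ : ℂ} (hτ : 0 < τ.im) : ∃ x : ℂ, jacobiTheta₂ x τ ≠ 0 := by
  by_contra! hcon
  have hs : Summable fun n : ℤ => ‖jacobiTheta₂_term n 0 τ‖ :=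
    ((summable_jacobiTheta₂_term_iff 0 τ).mpr hτ).norm
  have hnorm : ∀ (n : ℤ) (x : ℝ), ‖jacobiTheta₂_term n x τ‖ = ‖jacobiTheta₂_term n 0 τ‖ := by
    intro n x
    rw [norm_jacobiTheta₂_term, norm_jacobiTheta₂_term]; simp
  let f : ℤ → C(ℝ, ℂ) := fun n =>
    ⟨fun x : ℝ => jacobiTheta₂_term n x τ, by unfold jacobiTheta₂_term; fun_prop⟩
  have key := intervalIntegral.hasSum_intervalIntegral_of_summable_norm (a := 0) (b := 1) (f := f) (by
    refine hs.of_nonneg_of_le (fun n => norm_nonneg _) fun n => ?_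
    rw [ContinuousMap.norm_le _ (norm_nonneg _)]
    intro x
    exact (hnorm n x).le)
  have h0 : ∀ x : ℝ, ∑' n, f n x = 0 := by
    intro x
    have := (hasSum_jacobiTheta₂_term (x : ℂ) hτ).tsum_eq
    rw [hcon] at this
    exact this
  simp only [h0, intervalIntegral.integral_zero] at key
  have hi : ∀ n : ℤ, ∫ x in (0:ℝ)..1, f n x = if n = 0 then 1 else 0 := by
    intro n
    by_cases hn : n = 0
    · subst hn
      simp [f, jacobiTheta₂_term]
    · simp only [hn, if_false]
      have hc : (2 * Real.pi * Complex.I * n : ℂ) ≠ 0 := by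
        have := Real.pi_ne_zero
        simp [hn]
      have e : ∀ x : ℝ, f n x = Complex.exp ((2 * Real.pi * Complex.I * n) * x) *
          Complex.exp (Real.pi * Complex.I * n ^ 2 * τ) := by
        intro x
        simp only [f, jacobiTheta₂_term, ContinuousMap.coe_mk, ← Complex.exp_add]
      simp only [e]
      rw [intervalIntegral.integral_mul_const, integral_exp_mul_complex hc]
      have : Complex.exp (2 * Real.pi * Complex.I * n) = 1 := by
        rw [mul_comm]; exact Complex.exp_int_mul_two_pi_mul_I n
      simp [this]
  simp only [hi] at key
  have := key.unique (hasSum_ite_eq 0 1)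
  simp at this

lemma exists_theta {ω₁ ω₂ : ℂ} (L : Lat ω₁ ω₂) :
    ∃ Θ : ℂ → ℂ, QP ω₁ ω₂ Θ 1 ∧ Θ 0 = 0 ∧ ∃ x, Θ x ≠ 0 := by
  set τ := ω₂ / ω₁ with hτ
  have hω := L.ω₁_ne
  have hτim : 0 < τ.im := by
    have : τ.im = ω₂.im / ω₁.re := by
      have h3 := L.h1'.ne'
      simp [hτ, Complex.div_im, L.h1, Complex.normSq_apply]
      field_simp
    rw [this]; exact div_pos L.h2 L.h1'
  refine ⟨fun z => jacobiTheta₂ (z / ω₁ + (1 + τ) / 2) τ, ⟨?_, 0, 0,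
    - 2 * Real.pi * Complex.I / ω₁, - Real.pi * Complex.I * (1 + 2 * τ), ?_, ?_, ?_⟩, ?_, ?_⟩
  · have : Differentiable ℂ (fun u => jacobiTheta₂ u τ) :=
      fun u => differentiableAt_jacobiTheta₂_fst u hτim
    exact this.comp (by fun_prop)
  · intro z
    beta_reduce
    rw [show (z + ω₁) / ω₁ + (1 + τ) / 2 = (z / ω₁ + (1 + τ) / 2) + 1 by field_simp; ring,
      jacobiTheta₂_add_left]
    simp
  · intro z
    simp only
    rw [show (z + ω₂) / ω₁ + (1 + τ) / 2 = (z / ω₁ + (1 + τ) / 2) + τ by rw [hτ]; field_simp; ring,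
      jacobiTheta₂_add_left']
    congr 2
    ring
  · push_cast; field_simp; ring
  · simp only [zero_div, zero_add]
    have e1 := jacobiTheta₂_add_left' (-((1 + τ) / 2)) τ
    have e2 := jacobiTheta₂_add_left (-((1 + τ) / 2) + τ) τ
    rw [jacobiTheta₂_neg_left] at e1
    rw [show -((1 + τ) / 2) + τ + 1 = (1 + τ) / 2 by ring, e1,
      show -(Real.pi : ℂ) * Complex.I * (τ + 2 * -((1 + τ) / 2)) = Real.pi * Complex.I by ring,
      Complex.exp_pi_mul_I] at e2
    linear_combination e2 / 2
  · obtain ⟨x, hx⟩ := theta_ne_zero hτim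
    refine ⟨(x - (1 + τ) / 2) * ω₁, ?_⟩
    simp only
    rwa [show (x - (1 + τ) / 2) * ω₁ / ω₁ + (1 + τ) / 2 = x by field_simp; ring]

section Legendre
variable {ω₁ ω₂ : ℂ}

lemma W_10 : W ω₁ ω₂ (1, 0) = ω₁ := by simp [W]
lemma W_01 : W ω₁ ω₂ (0, 1) = ω₂ := by simp [W]

lemma Lat.half10 (L : Lat ω₁ ω₂) (p : ℤ × ℤ) : W ω₁ ω₂ (1, 0) / 2 ≠ W ω₁ ω₂ p := by
  intro h
  have h3 : W ω₁ ω₂ (1 - 2 * p.1, - 2 * p.2) = 0 := by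
    simp only [W] at h ⊢; push_cast at h ⊢; linear_combination 2 * h
  have := W_eq_zero L.indep h3
  simp only [Prod.mk_eq_zero] at this
  omega

lemma Lat.half01 (L : Lat ω₁ ω₂) (p : ℤ × ℤ) : W ω₁ ω₂ (0, 1) / 2 ≠ W ω₁ ω₂ p := by
  intro h
  have h3 : W ω₁ ω₂ (- 2 * p.1, 1 - 2 * p.2) = 0 := by
    simp only [W] at h ⊢; push_cast at h ⊢; linear_combination 2 * h
  have := W_eq_zero L.indep h3
  simp only [Prod.mk_eq_zero] at this
  omega

lemma sigma_shift1 (L : Lat ω₁ ω₂) (z : ℂ) : wSigma ω₁ ω₂ (z + ω₁) =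
    -Complex.exp (2 * wZeta ω₁ ω₂ (ω₁ / 2) * (z + ω₁ / 2)) * wSigma ω₁ ω₂ z := by
  have := wSigma_shift L.indep (1, 0) L.half10 z
  rwa [W_10] at this

lemma sigma_shift2 (L : Lat ω₁ ω₂) (z : ℂ) : wSigma ω₁ ω₂ (z + ω₂) =
    -Complex.exp (2 * wZeta ω₁ ω₂ (ω₂ / 2) * (z + ω₂ / 2)) * wSigma ω₁ ω₂ z := by
  have := wSigma_shift L.indep (0, 1) L.half01 z
  rwa [W_01] at this

lemma sigma_nz (L : Lat ω₁ ω₂) : wSigma ω₁ ω₂ (ω₁ / 2) ≠ 0 := by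
  refine wSigma_ne_zero L.indep fun p => ?_
  have := L.half10 p
  rwa [W_10] at this

lemma sigma_QP (L : Lat ω₁ ω₂) : ∃ k : ℤ, QP ω₁ ω₂ (wSigma ω₁ ω₂) k ∧
    2 * wZeta ω₁ ω₂ (ω₁ / 2) * ω₂ - 2 * wZeta ω₁ ω₂ (ω₂ / 2) * ω₁ =
      2 * Real.pi * Complex.I * k := by
  have s1 := sigma_shift1 L
  have s2 := sigma_shift2 L
  set η₁ := 2 * wZeta ω₁ ω₂ (ω₁ / 2)
  set η₂ := 2 * wZeta ω₁ ω₂ (ω₂ / 2)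
  have hnz := sigma_nz L
  set x := ω₁ / 2
  have e1 := s1 (x + ω₂)
  have e2 := s2 (x + ω₁)
  rw [s2] at e1
  rw [s1, add_right_comm, e1] at e2
  have e3 : Complex.exp (η₁ * (x + ω₂ + ω₁ / 2)) * Complex.exp (η₂ * (x + ω₂ / 2)) =
      Complex.exp (η₂ * (x + ω₁ + ω₂ / 2)) * Complex.exp (η₁ * (x + ω₁ / 2)) := by
    refine mul_right_cancel₀ hnz ?_
    linear_combination e2
  rw [← Complex.exp_add, ← Complex.exp_add, Complex.exp_eq_exp_iff_exists_int] at e3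
  obtain ⟨k, hk⟩ := e3
  have hk' : η₁ * ω₂ - η₂ * ω₁ = 2 * Real.pi * Complex.I * k := by
    linear_combination hk
  refine ⟨k, ⟨wSigma_diff L.indep, η₁, η₁ * (ω₁ / 2) + Real.pi * Complex.I, η₂,
    η₂ * (ω₂ / 2) + Real.pi * Complex.I, fun z => ?_, fun z => ?_, hk'⟩, hk'⟩
  · rw [s1, ← add_assoc, Complex.exp_add, Complex.exp_pi_mul_I, ← mul_add]; ring
  · rw [s2, ← add_assoc, Complex.exp_add, Complex.exp_pi_mul_I, ← mul_add]; ring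

lemma sigma_simple (L : Lat ω₁ ω₂) (z : ℂ) (hz : wSigma ω₁ ω₂ z = 0) :
    (∃ p, z = W ω₁ ω₂ p) ∧ deriv (wSigma ω₁ ω₂) z ≠ 0 := by
  have h1 : ∃ p, z = W ω₁ ω₂ p := by
    by_contra! h
    exact wSigma_ne_zero L.indep h hz
  refine ⟨h1, ?_⟩
  obtain ⟨p, rfl⟩ := h1
  by_cases hp : p = 0
  · subst hp
    have : W ω₁ ω₂ 0 = 0 := by simp [W]
    rw [this, wSigma_deriv_zero L.indep]; exact one_ne_zero
  obtain ⟨A, B, C, h⟩ := wSigma_shift_quad L.indep p hp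
  have hC : C ≠ 0 := by
    intro h0
    have := h (ω₁ / 2 - W ω₁ ω₂ p)
    rw [h0, sub_add_cancel] at this
    simp only [zero_mul] at this
    exact sigma_nz L this
  have hd : HasDerivAt (fun z => wSigma ω₁ ω₂ (z + W ω₁ ω₂ p))
      (deriv (wSigma ω₁ ω₂) (W ω₁ ω₂ p)) 0 := by
    have := (wSigma_diff L.indep (0 + W ω₁ ω₂ p)).hasDerivAt
    simpa using this.comp_add_const 0 (W ω₁ ω₂ p)
  have hd0 : HasDerivAt (wSigma ω₁ ω₂) 1 0 := by
    have := (wSigma_diff L.indep 0).hasDerivAt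
    rwa [wSigma_deriv_zero L.indep] at this
  have hE : HasDerivAt (fun z => C * Complex.exp (A * z ^ 2 + B * z))
      (deriv (fun z => C * Complex.exp (A * z ^ 2 + B * z)) 0) 0 := by
    apply DifferentiableAt.hasDerivAt; fun_prop
  have hd2 := hE.mul hd0
  have hd3 : HasDerivAt (fun z => wSigma ω₁ ω₂ (z + W ω₁ ω₂ p)) C 0 := by
    have : (fun z => wSigma ω₁ ω₂ (z + W ω₁ ω₂ p)) =
      (fun z => C * Complex.exp (A * z ^ 2 + B * z)) * wSigma ω₁ ω₂ := funext h
    rw [this]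
    simpa [wSigma_zero] using hd2
  rw [hd.unique hd3]; exact hC

lemma sigma_legendre (L : Lat ω₁ ω₂) : QP ω₁ ω₂ (wSigma ω₁ ω₂) 1 ∧
    2 * wZeta ω₁ ω₂ (ω₁ / 2) * ω₂ - 2 * wZeta ω₁ ω₂ (ω₂ / 2) * ω₁ =
      2 * Real.pi * Complex.I := by
  obtain ⟨k, hk, hk'⟩ := sigma_QP L
  obtain ⟨Θ, hΘ, hΘ0, x, hx⟩ := exists_theta L
  have hσd := wSigma_diff L.indep
  have hσ0 := wSigma_zero ω₁ ω₂
  have hk1 : k = 1 := by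
    by_contra hne
    rcases lt_or_gt_of_ne hne with hlt | hgt
    · obtain ⟨n, hn⟩ := Int.eq_ofNat_of_zero_le (show 0 ≤ -k by omega)
      have h0 := hk.mul (hΘ.pow n)
      rw [show k + n * 1 = 0 by omega] at h0
      have hz := h0.eq_zero L 0 (by simp [hσ0])
      have := entire_cancel (f := wSigma ω₁ ω₂) (g := fun _ => 0) (s := fun z => Θ z ^ n)
        hσd (by fun_prop) (hΘ.pow n).1 x (pow_ne_zero _ hx) (by simpa using hz)
      exact sigma_nz L (congrFun this _)
    · obtain ⟨H, hH, hHs⟩ := entire_div hΘ.1 hσd (fun z hz => by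
        obtain ⟨⟨p, hp⟩, hd⟩ := sigma_simple L z hz
        refine ⟨?_, hd⟩
        have := (hΘ.zero_shift 0 p).mpr hΘ0
        rwa [zero_add, ← hp] at this)
      have hHq := hΘ.div hk hH hHs _ (sigma_nz L)
      obtain ⟨n, hn⟩ := Int.eq_ofNat_of_zero_le (show 0 ≤ k - 2 by omega)
      have h0 := hHq.mul (hΘ.pow (n + 1))
      rw [show 1 - k + ((n + 1 : ℕ) : ℤ) * 1 = 0 by push_cast; omega] at h0
      have hz := h0.eq_zero L 0 (by simp [hΘ0])
      have := entire_cancel (f := H) (g := fun _ => 0) (s := fun z => Θ z ^ (n + 1))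
        hH (by fun_prop) (hΘ.pow _).1 x (pow_ne_zero _ hx) (by simpa using hz)
      apply hx
      rw [hHs, this]; simp
  subst hk1
  exact ⟨hk, by simpa using hk'⟩

end Legendre

section Star
variable {ω₁ ω₂ : ℂ}
open ComplexConjugate

lemma area_key (L : Lat ω₁ ω₂) (harea : ω₁.re * ω₂.im = Real.pi / 2) :
    conj ω₁ * ω₂ - conj ω₂ * ω₁ = Real.pi * Complex.I := by
  apply Complex.ext
  · simp [L.h1]; ring
  · simp [L.h1]; linarith

lemma conj_ω₁ (L : Lat ω₁ ω₂) : conj ω₁ = ω₁ := Complex.conj_eq_iff_im.mpr L.h1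

lemma star_shift (L : Lat ω₁ ω₂) (harea : ω₁.re * ω₂.im = Real.pi / 2) (ω : ℂ)
    (hω : ω ∈ ({ω₁, ω₂} : Set ℂ)) (z : ℂ) :
    sigmaStar ω₁ ω₂ (z + ω) =
      - Complex.exp (2 * conj ω * z + conj ω * ω) * sigmaStar ω₁ ω₂ z := by
  have h0 := L.ω₁_ne
  have hb : ω₁ * bconst ω₁ ω₂ = ω₁ - wZeta ω₁ ω₂ (ω₁ / 2) := by
    unfold bconst lambda1; field_simp
  have key : ∀ ω η : ℂ, 2 * bconst ω₁ ω₂ * ω + η = 2 * conj ω →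
      wSigma ω₁ ω₂ (z + ω) = -Complex.exp (η * (z + ω / 2)) * wSigma ω₁ ω₂ z →
      sigmaStar ω₁ ω₂ (z + ω) =
        - Complex.exp (2 * conj ω * z + conj ω * ω) * sigmaStar ω₁ ω₂ z := by
    intro ω η h1 h2
    have e : Complex.exp (bconst ω₁ ω₂ * (z + ω) ^ 2) * Complex.exp (η * (z + ω / 2)) =
        Complex.exp (2 * conj ω * z + conj ω * ω) * Complex.exp (bconst ω₁ ω₂ * z ^ 2) := by
      rw [← Complex.exp_add, ← Complex.exp_add]; congr 1
      linear_combination (z + ω / 2) * h1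
    unfold sigmaStar
    rw [h2]
    linear_combination - wSigma ω₁ ω₂ z * e
  rcases hω with rfl | rfl
  · refine key _ _ ?_ (sigma_shift1 L z)
    rw [conj_ω₁ L]
    linear_combination 2 * hb
  · refine key _ _ ?_ (sigma_shift2 L z)
    have h3 := (sigma_legendre L).2
    have h4 := area_key L harea
    rw [conj_ω₁ L] at h4
    refine mul_left_cancel₀ h0 ?_
    linear_combination 2 * ω * hb - h3 + 2 * h4

lemma star_diff (L : Lat ω₁ ω₂) : Differentiable ℂ (sigmaStar ω₁ ω₂) := by
  have := wSigma_diff L.indep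
  unfold sigmaStar
  fun_prop

/-- holomorphic version of the pseudopolynomial -/
noncomputable def hp (ω₁ ω₂ α z : ℂ) : ℂ :=
  Complex.exp (2 * conj α * z - conj α * α) * sigmaStar ω₁ ω₂ (z - α)

lemma pseudo_eq (α z : ℂ) : pseudoPoly ω₁ ω₂ α z =
    Complex.exp (- (z * conj z)) * hp ω₁ ω₂ α z := by
  unfold pseudoPoly hp
  rw [← mul_assoc, ← mul_assoc, ← Complex.exp_add, ← Complex.exp_add]
  congr 2
  have h1 : ((‖z - α‖ ^ 2 : ℝ) : ℂ) = (z - α) * (conj z - conj α) := by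
    rw [← map_sub, Complex.mul_conj, Complex.normSq_eq_norm_sq]
  have h2 : (2 : ℂ) * Complex.I * ((conj α * z).im : ℂ) = conj α * z - α * conj z := by
    apply Complex.ext <;> simp <;> ring
  rw [h1, h2]; ring

/-- theta functions with characteristic -/
def Th (ω₁ ω₂ : ℂ) (N : ℕ) (γ : ℂ) (G : ℂ → ℂ) : Prop :=
  Differentiable ℂ G ∧ ∀ ω ∈ ({ω₁, ω₂} : Set ℂ), ∀ z, G (z + ω) =
    (-1) ^ N * Complex.exp (N * (conj ω * ω + 2 * conj ω * z) + 2 * (conj γ * ω - conj ω * γ)) * G z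

lemma hp_Th (L : Lat ω₁ ω₂) (harea : ω₁.re * ω₂.im = Real.pi / 2) (α : ℂ) :
    Th ω₁ ω₂ 1 α (hp ω₁ ω₂ α) := by
  have := star_diff L
  refine ⟨by unfold hp; fun_prop, fun ω hω z => ?_⟩
  unfold hp
  rw [show z + ω - α = z - α + ω by ring, star_shift L harea ω hω]
  have e : Complex.exp (2 * conj α * (z + ω) - conj α * α) *
      Complex.exp (2 * conj ω * (z - α) + conj ω * ω) =
      Complex.exp ((1 : ℕ) * (conj ω * ω + 2 * conj ω * z) + 2 * (conj α * ω - conj ω * α)) *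
      Complex.exp (2 * conj α * z - conj α * α) := by
    rw [← Complex.exp_add, ← Complex.exp_add]; congr 1; push_cast; ring
  linear_combination - sigmaStar ω₁ ω₂ (z - α) * e

lemma hp_zero (α : ℂ) : hp ω₁ ω₂ α α = 0 := by
  simp [hp, sigmaStar, wSigma_zero]

lemma hp_nz (L : Lat ω₁ ω₂) (α : ℂ) : hp ω₁ ω₂ α (ω₁ / 2 + α) ≠ 0 := by
  simp [hp, sigmaStar, sigma_nz L]

lemma hp_simple (L : Lat ω₁ ω₂) (α z : ℂ) (hz : hp ω₁ ω₂ α z = 0) :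
    (∃ p, z = α + W ω₁ ω₂ p) ∧ deriv (hp ω₁ ω₂ α) z ≠ 0 := by
  have hz' : wSigma ω₁ ω₂ (z - α) = 0 := by simpa [hp, sigmaStar] using hz
  obtain ⟨⟨p, hp'⟩, hd⟩ := sigma_simple L _ hz'
  refine ⟨⟨p, by rw [← hp']; ring⟩, ?_⟩
  have e : hp ω₁ ω₂ α = (fun z => Complex.exp (2 * conj α * z - conj α * α) *
      Complex.exp (bconst ω₁ ω₂ * (z - α) ^ 2)) * fun z => wSigma ω₁ ω₂ (z - α) := by
    funext z; simp only [hp, sigmaStar, Pi.mul_apply]; ring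
  have h1 : HasDerivAt (fun z => wSigma ω₁ ω₂ (z - α)) (deriv (wSigma ω₁ ω₂) (z - α)) z :=
    (wSigma_diff L.indep (z - α)).hasDerivAt.comp_sub_const z α
  have h2 : DifferentiableAt ℂ (fun z => Complex.exp (2 * conj α * z - conj α * α) *
      Complex.exp (bconst ω₁ ω₂ * (z - α) ^ 2)) z := by fun_prop
  rw [e, (h2.hasDerivAt.mul h1).deriv, hz']
  simp [hd]

namespace Th

lemma qp (L : Lat ω₁ ω₂) (harea : ω₁.re * ω₂.im = Real.pi / 2) {N : ℕ} {γ : ℂ} {G : ℂ → ℂ}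
    (hG : Th ω₁ ω₂ N γ G) : QP ω₁ ω₂ G N := by
  obtain ⟨d, h⟩ := hG
  have key : ∀ ω ∈ ({ω₁, ω₂} : Set ℂ), ∀ z, G (z + ω) =
      Complex.exp (2 * N * conj ω * z + (N * (conj ω * ω) + 2 * (conj γ * ω - conj ω * γ) +
        N * (Real.pi * Complex.I))) * G z := by
    intro ω hω z
    rw [h ω hω, ← Complex.exp_pi_mul_I, ← Complex.exp_nat_mul, ← Complex.exp_add]
    congr 2; ring
  refine ⟨d, _, _, _, _, key ω₁ (by simp), key ω₂ (by simp), ?_⟩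
  push_cast
  linear_combination 2 * N * area_key L harea

lemma mul {N M : ℕ} {γ δ : ℂ} {G H : ℂ → ℂ} (hG : Th ω₁ ω₂ N γ G) (hH : Th ω₁ ω₂ M δ H) :
    Th ω₁ ω₂ (N + M) (γ + δ) (fun z => G z * H z) := by
  refine ⟨hG.1.mul hH.1, fun ω hω z => ?_⟩
  beta_reduce
  rw [hG.2 ω hω, hH.2 ω hω]
  have e : Complex.exp (N * (conj ω * ω + 2 * conj ω * z) + 2 * (conj γ * ω - conj ω * γ)) *
    Complex.exp (M * (conj ω * ω + 2 * conj ω * z) + 2 * (conj δ * ω - conj ω * δ)) =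
    Complex.exp ((N + M : ℕ) * (conj ω * ω + 2 * conj ω * z) +
      2 * (conj (γ + δ) * ω - conj ω * (γ + δ))) := by
    rw [← Complex.exp_add]; congr 1; push_cast; rw [map_add]; ring
  rw [← e, pow_add]; ring

lemma smul {N : ℕ} {γ : ℂ} {G : ℂ → ℂ} (hG : Th ω₁ ω₂ N γ G) (c : ℂ) :
    Th ω₁ ω₂ N γ (fun z => c * G z) := by
  refine ⟨hG.1.const_mul c, fun ω hω z => ?_⟩
  beta_reduce
  rw [hG.2 ω hω]; ring

lemma one : Th ω₁ ω₂ 0 0 (fun _ => 1) := ⟨by fun_prop, by simp⟩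

lemma prod (L : Lat ω₁ ω₂) (harea : ω₁.re * ω₂.im = Real.pi / 2) (N : ℕ) (α : Fin N → ℂ) :
    Th ω₁ ω₂ N (∑ j, α j) (fun z => ∏ j, hp ω₁ ω₂ (α j) z) := by
  induction N with
  | zero => simpa using one
  | succ N ih =>
    simp only [Fin.prod_univ_castSucc, Fin.sum_univ_castSucc]
    exact (ih _).mul (hp_Th L harea _)

lemma div (L : Lat ω₁ ω₂) (harea : ω₁.re * ω₂.im = Real.pi / 2) {N : ℕ} {γ α : ℂ} {G H : ℂ → ℂ}
    (hG : Th ω₁ ω₂ (N + 1) γ G)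
    (hH : Differentiable ℂ H) (h : ∀ z, G z = H z * hp ω₁ ω₂ α z) :
    Th ω₁ ω₂ N (γ - α) H := by
  refine ⟨hH, fun ω hω z => ?_⟩
  have hpT := hp_Th L harea α
  have h3 : (fun z => H (z + ω)) = fun z => (-1) ^ N *
      Complex.exp (N * (conj ω * ω + 2 * conj ω * z) +
        2 * (conj (γ - α) * ω - conj ω * (γ - α))) * H z := by
    refine entire_cancel (hH.comp (by fun_prop)) (by fun_prop) hpT.1 _ (hp_nz L α) fun z => ?_
    have e1 := hG.2 ω hω z
    rw [h, h z, hpT.2 ω hω] at e1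
    have e2 : Complex.exp ((N + 1 : ℕ) * (conj ω * ω + 2 * conj ω * z) +
        2 * (conj γ * ω - conj ω * γ)) =
        Complex.exp (N * (conj ω * ω + 2 * conj ω * z) +
          2 * (conj (γ - α) * ω - conj ω * (γ - α))) *
        Complex.exp ((1 : ℕ) * (conj ω * ω + 2 * conj ω * z) +
          2 * (conj α * ω - conj ω * α)) := by
      rw [← Complex.exp_add]; congr 1; push_cast; rw [map_sub]; ring
    rw [e2] at e1
    have := Complex.exp_ne_zero ((1 : ℕ) * (conj ω * ω + 2 * conj ω * z) +
          2 * (conj α * ω - conj ω * α))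
    refine mul_left_cancel₀ this ?_
    rw [pow_succ] at e1
    linear_combination - e1
  exact congrFun h3 z

lemma congr_lat (L : Lat ω₁ ω₂) (harea : ω₁.re * ω₂.im = Real.pi / 2) {N : ℕ} {γ δ : ℂ} {G : ℂ → ℂ}
    (hG : Th ω₁ ω₂ N γ G) (h : γ - δ ∈ latticeSet ω₁ ω₂) : Th ω₁ ω₂ N δ G := by
  refine ⟨hG.1, fun ω hω z => ?_⟩
  rw [hG.2 ω hω]
  congr 2
  rw [Complex.exp_eq_exp_iff_exists_int]
  obtain ⟨m, n, h⟩ := h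
  have ha := area_key L harea
  have hc : conj γ - conj δ = m * conj ω₁ + n * conj ω₂ := by
    rw [← map_sub, h]; simp
  rcases hω with rfl | rfl
  · exact ⟨-n, by push_cast; linear_combination 2 * ω * hc - 2 * conj ω * h - 2 * n * ha⟩
  · exact ⟨m, by push_cast; linear_combination 2 * ω * hc - 2 * conj ω * h + 2 * m * ha⟩

lemma zero_case (L : Lat ω₁ ω₂) (harea : ω₁.re * ω₂.im = Real.pi / 2) {γ : ℂ} {G : ℂ → ℂ}
    (hG : Th ω₁ ω₂ 0 γ G) (x : ℂ) (hx : G x ≠ 0) :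
    γ ∈ latticeSet ω₁ ω₂ ∧ ∀ z, G z = G x := by
  have hn : ∀ ω : ℂ, ‖Complex.exp (2 * (conj γ * ω - conj ω * γ))‖ = 1 := by
    intro ω
    rw [Complex.norm_exp, Real.exp_eq_one_iff]
    simp; ring
  have hs : ∀ ω ∈ ({ω₁, ω₂} : Set ℂ), ∀ z, G (z + ω) =
      Complex.exp (2 * (conj γ * ω - conj ω * γ)) * G z := by
    intro ω hω z
    have := hG.2 ω hω z
    simpa using this
  have hc := L.const_of_norm_periodic hG.1
    (fun z => by rw [hs ω₁ (by simp), norm_mul, hn, one_mul])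
    (fun z => by rw [hs ω₂ (by simp), norm_mul, hn, one_mul])
  refine ⟨?_, fun z => hc z x⟩
  have he : ∀ ω ∈ ({ω₁, ω₂} : Set ℂ), ∃ n : ℤ, 2 * (conj γ * ω - conj ω * γ) =
      n * (2 * Real.pi * Complex.I) := by
    intro ω hω
    rw [← Complex.exp_eq_one_iff]
    have := hs ω hω x
    rw [hc (x + ω) x] at this
    exact mul_right_cancel₀ hx (by rw [one_mul]; exact this.symm)
  obtain ⟨n, hn⟩ := he ω₁ (by simp)
  obtain ⟨m, hm⟩ := he ω₂ (by simp)
  obtain ⟨a, b, rfl⟩ := L.coord γ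
  have ha := area_key L harea
  simp only [map_add, map_mul, Complex.conj_ofReal] at hn hm
  have hpi : (2 * Real.pi * Complex.I : ℂ) ≠ 0 := Complex.two_pi_I_ne_zero
  refine ⟨m, -n, ?_⟩
  have hb' : (b : ℂ) = - n := by
    refine mul_right_cancel₀ hpi ?_
    linear_combination - hn - 2 * b * ha
  have ha' : (a : ℂ) = m := by
    refine mul_right_cancel₀ hpi ?_
    linear_combination hm - 2 * a * ha
  rw [ha', hb']; push_cast; ring

lemma factor (L : Lat ω₁ ω₂) (harea : ω₁.re * ω₂.im = Real.pi / 2) (N : ℕ) :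
    ∀ (γ : ℂ) (G : ℂ → ℂ), Th ω₁ ω₂ N γ G → ∀ x, G x ≠ 0 →
    ∃ lam : ℂ, ∃ α : Fin N → ℂ, ((∑ j, α j) - γ) ∈ latticeSet ω₁ ω₂ ∧
      ∀ z, G z = lam * ∏ j, hp ω₁ ω₂ (α j) z := by
  induction N with
  | zero =>
    intro γ G hG x hx
    obtain ⟨⟨m, n, h⟩, h2⟩ := zero_case L harea hG x hx
    refine ⟨G x, Fin.elim0, ⟨-m, -n, ?_⟩, by simpa using h2⟩
    rw [h]; simp; ring
  | succ N ih =>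
    intro γ G hG x hx
    have hGq := hG.qp L harea
    obtain ⟨α, hα⟩ : ∃ α, G α = 0 := by
      by_contra! hcon
      have hpq := ((hp_Th L harea 0).qp L harea).pow (N + 1)
      obtain ⟨H, hH, hHs⟩ := entire_div hpq.1 hG.1 (fun z hz => absurd hz (hcon z))
      have hq := hpq.div hGq hH hHs x hx
      rw [show ((N + 1 : ℕ) : ℤ) * ((1 : ℕ) : ℤ) - ((N + 1 : ℕ) : ℤ) = 0 by simp] at hq
      have h0 : H 0 = 0 := by
        have := hHs 0
        rw [hp_zero] at this
        simp only [ne_eq, Nat.succ_ne_zero, not_false_eq_true, zero_pow] at this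
        exact (mul_eq_zero.mp this.symm).resolve_right (hcon 0)
      have hz := hq.eq_zero L 0 h0 (ω₁ / 2 + 0)
      have h5 := hHs (ω₁ / 2 + 0)
      rw [hz, zero_mul] at h5
      exact hp_nz L 0 (pow_eq_zero_iff (Nat.succ_ne_zero _) |>.mp h5)
    obtain ⟨H, hH, hHs⟩ := entire_div hG.1 (hp_Th L harea α).1 (fun z hz => by
      obtain ⟨⟨p, rfl⟩, hd⟩ := hp_simple L α z hz
      exact ⟨(hGq.zero_shift α p).mpr hα, hd⟩)
    have hHT := hG.div L harea hH hHs
    obtain ⟨lam, β, hβ, hf⟩ := ih (γ - α) H hHT x (fun h => hx (by rw [hHs, h, zero_mul]))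
    refine ⟨lam, Fin.cons α β, ?_, fun z => ?_⟩
    · rw [Fin.sum_univ_succ]
      simp only [Fin.cons_zero, Fin.cons_succ]
      convert hβ using 1
      ring
    · rw [Fin.prod_univ_succ]
      simp only [Fin.cons_zero, Fin.cons_succ]
      rw [hHs, hf]; ring

end Th
end Star

section Bridge
variable {ω₁ ω₂ : ℂ}
open ComplexConjugate

lemma dbar_exp_mul (c : ℂ) {F : ℂ → ℂ} {z : ℂ} (hF : DifferentiableAt ℝ F z) :
    DifferentiableAt ℝ (fun z => Complex.exp (c * (z * conj z)) * F z) z ∧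
    fderiv ℝ (fun z => Complex.exp (c * (z * conj z)) * F z) z 1 +
      Complex.I * fderiv ℝ (fun z => Complex.exp (c * (z * conj z)) * F z) z Complex.I =
    Complex.exp (c * (z * conj z)) * (2 * c * z * F z +
      (fderiv ℝ F z 1 + Complex.I * fderiv ℝ F z Complex.I)) := by
  have hid : HasFDerivAt (fun z : ℂ => z) (ContinuousLinearMap.id ℝ ℂ) z := hasFDerivAt_id z
  have hcj : HasFDerivAt (fun z : ℂ => conj z) (Complex.conjCLE : ℂ →L[ℝ] ℂ) z :=
    Complex.conjCLE.hasFDerivAt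
  have hq := ((hid.mul hcj).const_mul c).cexp
  have h := hq.mul hF.hasFDerivAt
  have h' : HasFDerivAt (fun z => Complex.exp (c * (z * conj z)) * F z) _ z := h
  refine ⟨h'.differentiableAt, ?_⟩
  rw [h'.fderiv]
  simp
  ring_nf
  simp
  ring

lemma bridge (N : ℕ) (γ : ℂ) (F G : ℂ → ℂ)
    (hFG : ∀ z, F z = Complex.exp (- N * (z * conj z)) * G z) :
    (ContDiff ℝ 1 F ∧
      (∀ z : ℂ,
        (fderiv ℝ F z 1 + Complex.I * fderiv ℝ F z Complex.I) / 2 +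
          (N : ℂ) * z * F z = 0) ∧
      (∀ ω ∈ ({ω₁, ω₂} : Set ℂ), ∀ z : ℂ,
        F (z + ω) =
          (-1 : ℂ) ^ N *
            Complex.exp (2 * Complex.I *
              ((((starRingEnd ℂ) ω) * ((N : ℂ) * z - 2 * γ)).im : ℂ)) * F z)) ↔
    Th ω₁ ω₂ N γ G := by
  have hGF : ∀ z, G z = Complex.exp (N * (z * conj z)) * F z := by
    intro z
    rw [hFG, ← mul_assoc, ← Complex.exp_add]
    simp
  have hF' : F = fun z => Complex.exp (- N * (z * conj z)) * G z := funext hFG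
  have hG' : G = fun z => Complex.exp (N * (z * conj z)) * F z := funext hGF
  have hdiff : (ContDiff ℝ 1 F ∧ (∀ z : ℂ,
        (fderiv ℝ F z 1 + Complex.I * fderiv ℝ F z Complex.I) / 2 +
          (N : ℂ) * z * F z = 0)) ↔ Differentiable ℂ G := by
    constructor
    · rintro ⟨hc, he⟩ z
      have hd : DifferentiableAt ℝ F z := hc.differentiable one_ne_zero z
      obtain ⟨h1, h2⟩ := dbar_exp_mul (N : ℂ) hd
      rw [← hG'] at h1 h2
      rw [differentiableAt_complex_iff_differentiableAt_real]
      refine ⟨h1, ?_⟩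
      have h3 : fderiv ℝ G z 1 + Complex.I * fderiv ℝ G z Complex.I = 0 := by
        rw [h2]; linear_combination 2 * Complex.exp (N * (z * conj z)) * he z
      rw [smul_eq_mul]
      linear_combination - Complex.I * h3 + fderiv ℝ G z Complex.I * Complex.I_sq
    · intro hG
      have hcG : ContDiff ℝ 1 G := (hG.contDiff (n := 1)).restrict_scalars ℝ
      refine ⟨?_, fun z => ?_⟩
      · rw [hF']
        have hcj : ContDiff ℝ 1 (fun z : ℂ => conj z) := Complex.conjCLE.contDiff
        exact ((contDiff_const.mul (contDiff_id.mul hcj)).cexp).mul hcG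
      · have hg := (differentiableAt_complex_iff_differentiableAt_real.mp (hG z))
        obtain ⟨h1, h2⟩ := dbar_exp_mul (- N : ℂ) hg.1
        rw [← hF', hg.2, smul_eq_mul] at h2
        rw [h2, hFG z]
        linear_combination Complex.exp (- N * (z * conj z)) * fderiv ℝ G z 1 / 2 * Complex.I_sq
  have hshift : ∀ ω z : ℂ, (F (z + ω) =
          (-1 : ℂ) ^ N *
            Complex.exp (2 * Complex.I *
              ((((starRingEnd ℂ) ω) * ((N : ℂ) * z - 2 * γ)).im : ℂ)) * F z) ↔
      G (z + ω) = (-1) ^ N * Complex.exp (N * (conj ω * ω + 2 * conj ω * z) +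
        2 * (conj γ * ω - conj ω * γ)) * G z := by
    intro ω z
    have him : (2 : ℂ) * Complex.I * ((conj ω * ((N : ℂ) * z - 2 * γ)).im : ℂ) =
        conj ω * (N * z - 2 * γ) - ω * (N * conj z - 2 * conj γ) := by
      apply Complex.ext <;> simp <;> ring
    rw [him, hFG (z + ω), hFG z]
    have e : Complex.exp (conj ω * (N * z - 2 * γ) - ω * (N * conj z - 2 * conj γ)) *
        Complex.exp (- N * (z * conj z)) = Complex.exp (- N * ((z + ω) * conj (z + ω))) *
        Complex.exp (N * (conj ω * ω + 2 * conj ω * z) + 2 * (conj γ * ω - conj ω * γ)) := by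
      rw [← Complex.exp_add, ← Complex.exp_add, map_add]; congr 1; ring
    rw [show (-1 : ℂ) ^ N * Complex.exp (conj ω * (N * z - 2 * γ) - ω * (N * conj z - 2 * conj γ)) *
      (Complex.exp (- N * (z * conj z)) * G z) = (-1 : ℂ) ^ N *
      (Complex.exp (conj ω * (N * z - 2 * γ) - ω * (N * conj z - 2 * conj γ)) *
        Complex.exp (- N * (z * conj z))) * G z by ring, e]
    constructor
    · intro h
      refine mul_left_cancel₀ (Complex.exp_ne_zero (- N * ((z + ω) * conj (z + ω)))) ?_
      linear_combination h
    · intro h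
      rw [h]; ring
  rw [← and_assoc, hdiff]
  unfold Th
  simp only [hshift]

end Bridge

end SigmaAux

/-- characterization of the fiber `ψpol_N^γ(ℂ/Λ)`: a function
`F : ℂ → ℂ` is a multiple `λ·Π_𝛂` of a monic pseudopolynomial of degree `N`
with `α₁ + ⋯ + α_N − γ ∈ Λ` if and only if `F` is `C¹`-smooth, satisfies the
differential equation `∂̄F + NzF = 0` and the periodicity-type conditions. -/
theorem fiber_characterization (ω₁ ω₂ : ℂ)
    (h1 : ω₁.im = 0) (h1' : 0 < ω₁.re) (h2 : 0 < ω₂.im)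
    (harea : ω₁.re * ω₂.im = Real.pi / 2)
    (N : ℕ) (hN : 1 ≤ N) (γ : ℂ) (F : ℂ → ℂ) :
    (∃ lam : ℂ, ∃ α : Fin N → ℂ,
      ((∑ j, α j) - γ) ∈ latticeSet ω₁ ω₂ ∧
      F = fun z => lam * ∏ j, pseudoPoly ω₁ ω₂ (α j) z) ↔
    ContDiff ℝ 1 F ∧
      (∀ z : ℂ,
        (fderiv ℝ F z 1 + Complex.I * fderiv ℝ F z Complex.I) / 2 +
          (N : ℂ) * z * F z = 0) ∧
      (∀ ω ∈ ({ω₁, ω₂} : Set ℂ), ∀ z : ℂ,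
        F (z + ω) =
          (-1 : ℂ) ^ N *
            Complex.exp (2 * Complex.I *
              ((((starRingEnd ℂ) ω) * ((N : ℂ) * z - 2 * γ)).im : ℂ)) * F z) := by
  have L : SigmaAux.Lat ω₁ ω₂ := ⟨h1, h1', h2⟩
  rw [SigmaAux.bridge N γ F
    (fun z => Complex.exp (N * (z * (starRingEnd ℂ) z)) * F z) (fun z => by
      rw [← mul_assoc, ← Complex.exp_add]; simp)]
  have hprod : ∀ (α : Fin N → ℂ) (z : ℂ), ∏ j, pseudoPoly ω₁ ω₂ (α j) z =
      Complex.exp (- N * (z * (starRingEnd ℂ) z)) * ∏ j, SigmaAux.hp ω₁ ω₂ (α j) z := by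
    intro α z
    simp only [SigmaAux.pseudo_eq]
    rw [Finset.prod_mul_distrib, Finset.prod_const, Finset.card_univ, Fintype.card_fin,
      ← Complex.exp_nat_mul]
    congr 2; ring
  have hcancel : ∀ z : ℂ, Complex.exp (N * (z * (starRingEnd ℂ) z)) *
      Complex.exp (- N * (z * (starRingEnd ℂ) z)) = 1 := by
    intro z; rw [← Complex.exp_add]; simp
  constructor
  · rintro ⟨lam, α, hα, rfl⟩
    have h3 := ((SigmaAux.Th.prod L harea N α).congr_lat L harea hα).smul lam
    convert h3 using 2 with z
    beta_reduce
    rw [hprod]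
    linear_combination lam * (∏ j, SigmaAux.hp ω₁ ω₂ (α j) z) * hcancel z
  · intro hT
    by_cases hF : ∀ z, F z = 0
    · refine ⟨0, Pi.single ⟨0, hN⟩ γ, ⟨0, 0, ?_⟩, ?_⟩
      · rw [Finset.sum_pi_single']; simp
      · funext z; simp [hF z]
    · push Not at hF
      obtain ⟨x, hx⟩ := hF
      obtain ⟨lam, α, hα, hf⟩ := SigmaAux.Th.factor L harea N γ _ hT x
        (mul_ne_zero (Complex.exp_ne_zero _) hx)
      refine ⟨lam, α, hα, ?_⟩
      funext z
      have h4 := hf z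
      rw [hprod]
      linear_combination Complex.exp (- N * (z * (starRingEnd ℂ) z)) * h4 - F z * hcancel z
end
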